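/- arXiv:2509.20167 — 2 statements merged into one kernel-verified Lean document; each statement's English description precedes it below -/
import Mathlib

section
/- Let f, g : ℂ → ℂ be continuous functions with no common zeros. Assume that f(z)/g(z) → ∞ as |z| → ∞, and that there is a constant M > 0 such that f(z) ≠ 0 for all |z| ≥ M. Define R : ℂ̄ → ℂ̄ by R(z) = f(z)/g(z) if g(z) ≠ 0, R(z) = ∞ if g(z) = 0, and R(∞) = ∞, and assume R is continuous. Then the degree of the map R equals the winding number about 0 of the loop φ ↦ f(M·e^{iφ}), φ ∈ [0, 2π]. -/
open Complex Topology unitInterval Filter OnePoint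
open scoped OnePoint

/-- The standard map of degree `n` on the Riemann sphere `ℂ̄ = ℂ ∪ {∞}`
(identified with `S²` via stereographic projection): for `n > 0` it is `z ↦ zⁿ`,
for `n = 0` the constant map `1`, and for `n < 0` it is `z ↦ (conj z)^(-n)`,
each sending `∞ ↦ ∞` (for `n ≠ 0`). -/
noncomputable def stdSphereMap (n : ℤ) : OnePoint ℂ → OnePoint ℂ := fun z =>
  OnePoint.rec (if n = 0 then ((1 : ℂ) : OnePoint ℂ) else (∞ : OnePoint ℂ))
    (fun w =>
      if n = 0 then ((1 : ℂ) : OnePoint ℂ)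
      else if 0 < n then ((w ^ n.toNat : ℂ) : OnePoint ℂ)
      else (((starRingEnd ℂ) w ^ (-n).toNat : ℂ) : OnePoint ℂ)) z

/-- `R : ℂ̄ → ℂ̄` has topological degree `n`: by Hopf's theorem this holds iff `R` is
(freely) homotopic to the standard degree-`n` map; the degree is the integer corresponding
to the homotopy class of `R` under `π₂(S²) ≅ ℤ`, the identity map having degree `1`. -/
def HasDegree (R : OnePoint ℂ → OnePoint ℂ) (n : ℤ) : Prop :=
  ∃ H : OnePoint ℂ × I → OnePoint ℂ, Continuous H ∧
    (∀ z, H (z, 0) = R z) ∧ (∀ z, H (z, 1) = stdSphereMap n z)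

/-- The continuous loop `γ : [0, 2π] → ℂ \ {0}` has winding number `n` about `0`:
there is a continuous choice of argument `θ` along the loop whose total increment
is `2πn` (counterclockwise loops get positive winding numbers). -/
def IsWindingNumber (γ : ℝ → ℂ) (n : ℤ) : Prop :=
  ∃ θ : ℝ → ℝ, ContinuousOn θ (Set.Icc 0 (2 * Real.pi)) ∧
    (∀ t ∈ Set.Icc 0 (2 * Real.pi),
      γ t = (‖γ t‖ : ℂ) * Complex.exp ((θ t : ℂ) * Complex.I)) ∧
    θ (2 * Real.pi) - θ 0 = 2 * Real.pi * (n : ℝ)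

/-!
`R` is the map `[f : g]` in homogeneous coordinates.

If the boundary loop has winding number `n`, then outside the disc `f = zⁿ e^L` (with `z̄` in place
of `z` for negative exponents). Dividing `f` and `g` by a continuous extension of `e^L` does not
change `R`, so one may assume `f = zⁿ` near `∞`; a straight-line homotopy, perturbed so as to avoid
common zeros, then leads to `[zⁿ : 1]`.

Conversely, a homotopy between `R` and the map `[zⁿ : 1]` is a path of line subbundles of the
trivial bundle `ℂ²` over the sphere. Orthogonal projection between nearby lines is injective, so the
two end bundles are isomorphic. Comparing their trivialisations over a disc and over the
complementary disc around `∞` shows that `f` and `zⁿ` differ on the common circle by factors which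
extend without zeros to a disc, and so have winding number `0`.
-/

section ProjectiveLine

variable {K : Type*} [NormedField K]

open scoped Classical in
/-- The point `[q.1 : q.2]` of the projective line `K ∪ {∞}`; the non-point `[0 : 0]` goes
to `∞`. -/
noncomputable def projPoint (q : K × K) : OnePoint K :=
  if q.2 = 0 then ∞ else ((q.1 / q.2 : K) : OnePoint K)

lemma projPoint_of_snd_eq_zero {q : K × K} (h : q.2 = 0) : projPoint q = ∞ := if_pos h

lemma projPoint_of_snd_ne_zero {q : K × K} (h : q.2 ≠ 0) :
    projPoint q = ((q.1 / q.2 : K) : OnePoint K) := if_neg h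

@[simp] lemma projPoint_mk_zero (a : K) : projPoint (a, 0) = ∞ := projPoint_of_snd_eq_zero rfl

@[simp] lemma projPoint_mk_one (a : K) : projPoint (a, 1) = (a : OnePoint K) := by
  simp [projPoint_of_snd_ne_zero]

lemma projPoint_smul {a : K} (ha : a ≠ 0) (q : K × K) : projPoint (a • q) = projPoint q := by
  by_cases h : q.2 = 0 <;> simp [projPoint, h, ha, mul_div_mul_left]

lemma projPoint_eq_coe_iff {q : K × K} {a : K} :
    projPoint q = (a : OnePoint K) ↔ q.2 ≠ 0 ∧ q.1 = a * q.2 := by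
  by_cases h : q.2 = 0
  · simp [projPoint, h]
  · simp [projPoint, h, div_eq_iff]

lemma fst_ne_zero_of_projPoint_ne_zero {q : K × K} (hq : q ≠ 0)
    (h : projPoint q ≠ ((0 : K) : OnePoint K)) : q.1 ≠ 0 := fun h1 =>
  h (projPoint_eq_coe_iff.2 ⟨fun h2 => hq (Prod.ext h1 h2), by rw [h1, zero_mul]⟩)

lemma tendsto_projPoint_infty {α : Type*} {l : Filter α} {q : α → K × K}
    (h : (fun x => (q x).2) =o[l] fun x => (q x).1) :
    Tendsto (fun x => projPoint (q x)) l (𝓝 ∞) := by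
  rw [OnePoint.hasBasis_nhds_infty.tendsto_right_iff]
  rintro s ⟨-, hs⟩
  obtain ⟨C, hC, hsC⟩ := hs.isBounded.exists_pos_norm_lt
  filter_upwards [h.bound (inv_pos.2 hC)] with x hx
  by_cases h0 : (q x).2 = 0
  · exact Or.inr (projPoint_of_snd_eq_zero h0)
  · refine Or.inl ⟨_, fun hmem => (hsC _ hmem).not_ge ?_, (projPoint_of_snd_ne_zero h0).symm⟩
    rwa [norm_div, le_div_iff₀ (norm_pos_iff.2 h0), ← le_inv_mul_iff₀ hC]

lemma continuousAt_projPoint {q : K × K} (hq : q ≠ 0) : ContinuousAt projPoint q := by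
  by_cases h0 : q.2 = 0
  · have h1 : q.1 ≠ 0 := fun h => hq (Prod.ext h h0)
    rw [ContinuousAt, projPoint_of_snd_eq_zero h0]
    have hsnd : (fun p : K × K => p.2) =o[𝓝 q] fun _ => (1 : K) :=
      (Asymptotics.isLittleO_one_iff K).2 (h0 ▸ continuous_snd.tendsto q)
    have hfst : (fun _ => (1 : K)) =O[𝓝 q] fun p : K × K => p.1 :=
      (Asymptotics.isBigO_const_const 1 h1 _).trans
        ((Asymptotics.isEquivalent_const_iff_tendsto h1).2 (continuous_fst.tendsto q)).isBigO_symm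
    exact tendsto_projPoint_infty (q := id) (hsnd.trans_isBigO hfst)
  · have hdiv : ContinuousAt (fun p : K × K => ((p.1 / p.2 : K) : OnePoint K)) q :=
      OnePoint.continuous_coe.continuousAt.comp (continuousAt_fst.div continuousAt_snd h0)
    refine hdiv.congr ?_
    filter_upwards [continuousAt_snd.eventually_ne h0] with p hp
    exact (projPoint_of_snd_ne_zero hp).symm

/-- The self-map of the projective line fixing `∞` and given on `K` by homogeneous coordinates. -/
noncomputable def sphereMap (q : K → K × K) (z : OnePoint K) : OnePoint K :=
  z.elim ∞ fun w => projPoint (q w)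

@[simp] lemma sphereMap_infty (q : K → K × K) : sphereMap q ∞ = ∞ := rfl

@[simp] lemma sphereMap_coe (q : K → K × K) (z : K) : sphereMap q z = projPoint (q z) := rfl

lemma sphereMap_smul {a : K → K} (ha : ∀ z, a z ≠ 0) (q : K → K × K) :
    (sphereMap fun z => a z • q z) = sphereMap q := by
  ext1 x
  induction x using OnePoint.rec with
  | infty => rfl
  | coe z => exact projPoint_smul (ha z) (q z)

lemma continuous_sphereMap_family [ProperSpace K] {Y : Type*} [TopologicalSpace Y]
    {q : Y → K → K × K} (hq : Continuous ↿q) (hq0 : ∀ y z, q y z ≠ 0)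
    (hinf : ∀ y, (fun p : Y × K => (q p.1 p.2).2) =o[𝓝 y ×ˢ Bornology.cobounded K]
      fun p => (q p.1 p.2).1) :
    Continuous fun p : Y × OnePoint K => sphereMap (q p.1) p.2 := by
  rw [continuous_iff_continuousAt]
  rintro ⟨y, z⟩
  induction z using OnePoint.rec with
  | infty =>
    rw [ContinuousAt, nhds_prod_eq, OnePoint.nhds_infty_eq, coclosedCompact_eq_cocompact,
      ← Metric.cobounded_eq_cocompact, Filter.prod_sup, tendsto_sup, prod_pure]
    refine ⟨?_, ?_⟩
    · rw [← Filter.map_id (f := 𝓝 y), prod_map_map_eq, tendsto_map'_iff]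
      exact tendsto_projPoint_infty (hinf y)
    · rw [tendsto_map'_iff]
      exact tendsto_const_nhds
  | coe z =>
    have hemb : IsOpenEmbedding (Prod.map (id : Y → Y) ((↑) : K → OnePoint K)) :=
      IsOpenEmbedding.id.prodMap OnePoint.isOpenEmbedding_coe
    refine (hemb.continuousAt_iff (x := (y, z))).1 ?_
    exact ContinuousAt.comp (f := ↿q) (continuousAt_projPoint (hq0 y z)) hq.continuousAt

end ProjectiveLine

section Degree

lemma hasDegree_iff_homotopic {R : C(OnePoint ℂ, OnePoint ℂ)} {n : ℤ} :
    HasDegree R n ↔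
      ∃ S : C(OnePoint ℂ, OnePoint ℂ), ⇑S = stdSphereMap n ∧ R.Homotopic S := by
  constructor
  · rintro ⟨H, hH, h0, h1⟩
    exact ⟨⟨fun z => H (z, 1), by fun_prop⟩, funext h1,
      ⟨⟨⟨fun p => H (p.2, p.1), by fun_prop⟩, h0, fun _ => rfl⟩⟩⟩
  · rintro ⟨S, hS, ⟨F⟩⟩
    exact ⟨fun p => F (p.2, p.1), by fun_prop, F.apply_zero,
      fun z => (F.apply_one z).trans (congrFun hS z)⟩

lemma HasDegree.of_homotopic {R R' : C(OnePoint ℂ, OnePoint ℂ)} {n : ℤ}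
    (hR' : HasDegree R' n) (h : R.Homotopic R') : HasDegree R n :=
  have ⟨S, hS, hR'S⟩ := hasDegree_iff_homotopic.1 hR'
  hasDegree_iff_homotopic.2 ⟨S, hS, h.trans hR'S⟩

lemma HasDegree.of_pair_homotopy {n : ℤ} {Q : I → ℂ → ℂ × ℂ} (hQ : Continuous ↿Q)
    (hQ0 : ∀ t z, Q t z ≠ 0)
    (hinf : ∀ t, (fun p : I × ℂ => (Q p.1 p.2).2) =o[𝓝 t ×ˢ Bornology.cobounded ℂ]
      fun p => (Q p.1 p.2).1)
    (h1 : HasDegree (sphereMap (Q 1)) n) : HasDegree (sphereMap (Q 0)) n := by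
  let F : C(I × OnePoint ℂ, OnePoint ℂ) :=
    ⟨fun p => sphereMap (Q p.1) p.2, continuous_sphereMap_family hQ hQ0 hinf⟩
  exact HasDegree.of_homotopic (R := F.curry 0) (R' := F.curry 1) h1
    ⟨⟨F, fun _ => rfl, fun _ => rfl⟩⟩

end Degree

section Logarithm

universe u

variable {X : Type u} [TopologicalSpace X]

lemma exists_continuous_exp_eq [SimplyConnectedSpace X] [LocallyPathConnectedSpace X]
    {k : X → ℂ} (hk : Continuous k) (hk0 : ∀ x, k x ≠ 0) :
    ∃ l : X → ℂ, Continuous l ∧ ∀ x, exp (l x) = k x := by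
  obtain ⟨x₀⟩ : Nonempty X := inferInstance
  obtain ⟨l, ⟨-, hl⟩, -⟩ := isCoveringMapOn_exp.existsUnique_continuousMap_lifts
    ⟨k, hk⟩ (exp_log (hk0 x₀)) hk0
  exact ⟨l, l.continuous, congrFun hl⟩

-- By the Tietze property `S` is a retract of `X`.
lemma exists_continuous_exp_eqOn [SimplyConnectedSpace X] [LocallyPathConnectedSpace X]
    [NormalSpace X] {S : Set X} (hS : IsClosed S) [TietzeExtension.{u, u} S] {k : X → ℂ}
    (hk : ContinuousOn k S) (hk0 : ∀ x ∈ S, k x ≠ 0) :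
    ∃ l : X → ℂ, Continuous l ∧ ∀ x ∈ S, exp (l x) = k x := by
  obtain ⟨ρ, hρ⟩ := (ContinuousMap.id S).exists_restrict_eq hS
  obtain ⟨l, hl, hlk⟩ := exists_continuous_exp_eq (k := fun x => k (ρ x))
    (hk.comp_continuous (by fun_prop) fun x => (ρ x).2) fun x => hk0 _ (ρ x).2
  refine ⟨l, hl, fun x hx => ?_⟩
  have hρx : ρ x = ⟨x, hx⟩ := congr($hρ ⟨x, hx⟩)
  rw [hlk, hρx]

lemma sub_eq_sub_of_exp_eqOn {S : Set X} (hS : IsPreconnected S) {l₁ l₂ : X → ℂ}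
    (hl₁ : ContinuousOn l₁ S) (hl₂ : ContinuousOn l₂ S)
    (hexp : ∀ x ∈ S, exp (l₁ x) = exp (l₂ x)) {x y : X} (hx : x ∈ S) (hy : y ∈ S) :
    l₁ x - l₂ x = l₁ y - l₂ y := by
  have hconst : exp (l₁ y - l₂ y) = 1 := by
    rw [exp_sub, hexp y hy, div_self (exp_ne_zero _)]
  have heq : Set.EqOn l₁ (fun x => l₂ x + (l₁ y - l₂ y)) S :=
    isCoveringMap_exp.eqOn_of_comp_eqOn hS hl₁ (hl₂.add continuousOn_const)
      (fun x hx => Subtype.ext (by simp [exp_add, hconst, hexp x hx])) hy (by simp)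
  rw [heq hx, add_sub_cancel_left]

end Logarithm

section WindingNumber

variable {γ δ : ℝ → ℂ} {m n : ℤ}

lemma isWindingNumber_exp_iff {l : ℝ → ℂ} (hl : ContinuousOn l (Set.Icc 0 (2 * Real.pi))) :
    IsWindingNumber (fun t => exp (l t)) n ↔
      (l (2 * Real.pi)).im - (l 0).im = 2 * Real.pi * n := by
  have hpolar (t : ℝ) : exp (l t) = ‖exp (l t)‖ * exp ((l t).im * Complex.I) := by
    rw [norm_exp, ofReal_exp, ← exp_add, re_add_im]
  constructor
  · rintro ⟨θ, hθ, hγθ, hn⟩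
    have hexp : ∀ t ∈ Set.Icc 0 (2 * Real.pi),
        exp ((l t).im * Complex.I) = exp (θ t * Complex.I) := fun t ht =>
      mul_left_cancel₀ (ofReal_ne_zero.2 (norm_ne_zero_iff.2 (exp_ne_zero (l t))))
        ((hpolar t).symm.trans (hγθ t ht))
    have hsub := sub_eq_sub_of_exp_eqOn isPreconnected_Icc (by fun_prop) (by fun_prop) hexp
      (Set.right_mem_Icc.2 Real.two_pi_pos.le) (Set.left_mem_Icc.2 Real.two_pi_pos.le)
    have him := congr(Complex.im $hsub)
    simp only [sub_im, mul_I_im, ofReal_re] at him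
    linarith
  · exact fun hn => ⟨fun t => (l t).im, by fun_prop, fun t _ => hpolar t, hn⟩

lemma IsWindingNumber.congr (h : IsWindingNumber γ n)
    (hγδ : Set.EqOn γ δ (Set.Icc 0 (2 * Real.pi))) : IsWindingNumber δ n :=
  have ⟨θ, hθ, hγθ, hn⟩ := h
  ⟨θ, hθ, fun t ht => hγδ ht ▸ hγθ t ht, hn⟩

lemma IsWindingNumber.mul (hγ : IsWindingNumber γ m) (hδ : IsWindingNumber δ n) :
    IsWindingNumber (fun t => γ t * δ t) (m + n) := by
  obtain ⟨θ, hθ, hγθ, hm⟩ := hγ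
  obtain ⟨η, hη, hδη, hn⟩ := hδ
  refine ⟨fun t => θ t + η t, hθ.add hη, fun t ht => ?_, by push_cast; linarith⟩
  rw [norm_mul, ofReal_add, add_mul, exp_add, ofReal_mul, mul_mul_mul_comm, ← hγθ t ht,
    ← hδη t ht]

lemma IsWindingNumber.div (hγ : IsWindingNumber γ m) (hδ : IsWindingNumber δ n) :
    IsWindingNumber (fun t => γ t / δ t) (m - n) := by
  obtain ⟨θ, hθ, hγθ, hm⟩ := hγ
  obtain ⟨η, hη, hδη, hn⟩ := hδ
  refine ⟨fun t => θ t - η t, hθ.sub hη, fun t ht => ?_, by push_cast; linarith⟩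
  rw [norm_div, ofReal_sub, sub_mul, exp_sub, ofReal_div, div_mul_div_comm, ← hγθ t ht,
    ← hδη t ht]

lemma isWindingNumber_zero_of_mapsTo_closedBall {c : ℂ} {r : ℝ} (hr : 0 < r) {k : ℂ → ℂ}
    (hk : ContinuousOn k (Metric.closedBall c r)) (hk0 : ∀ z ∈ Metric.closedBall c r, k z ≠ 0)
    {ω : ℝ → ℂ} (hω : Continuous ω) (hωc : ∀ t, ω t ∈ Metric.closedBall c r)
    (hclosed : ω (2 * Real.pi) = ω 0) : IsWindingNumber (fun t => k (ω t)) 0 := by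
  have := Metric.instTietzeExtensionClosedBall ℂ c hr
  obtain ⟨l, hl, hlk⟩ := exists_continuous_exp_eqOn Metric.isClosed_closedBall hk hk0
  have h0 : IsWindingNumber (fun t => exp (l (ω t))) 0 :=
    (isWindingNumber_exp_iff (by fun_prop)).2 (by simp [hclosed])
  exact h0.congr fun t _ => hlk _ (hωc t)

lemma periodic_of_isWindingNumber_zero {l : ℂ → ℂ} (hl : Continuous l)
    (hexp : Function.Periodic (fun w => exp (l w)) (2 * Real.pi * Complex.I)) {a : ℂ}
    (ha : IsWindingNumber (fun t => exp (l (a + t * Complex.I))) 0) :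
    Function.Periodic l (2 * Real.pi * Complex.I) := by
  have hincr : l (a + 2 * Real.pi * Complex.I) = l a := by
    have him := (isWindingNumber_exp_iff (l := fun t : ℝ => l (a + t * Complex.I))
      (by fun_prop)).1 ha
    refine Complex.ext ?_ (by simpa [sub_eq_zero] using him)
    simpa [norm_exp] using congr(‖$(hexp a)‖)
  intro w
  have hsub := sub_eq_sub_of_exp_eqOn isPreconnected_univ (by fun_prop) hl.continuousOn
    (fun w _ => hexp w) (Set.mem_univ w) (Set.mem_univ a)
  rwa [hincr, sub_self, sub_eq_zero] at hsub

-- Pulled back along `exp`, the map has a logarithm `l` on `ℂ`; the zero winding number makes `l`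
-- periodic, so that it descends to the punctured plane.
lemma exists_continuousOn_exp_eq_of_isWindingNumber_zero {F : ℂ → ℂ}
    (hF : ContinuousOn F {0}ᶜ) (hF0 : ∀ z ≠ 0, F z ≠ 0) {M : ℝ} (hM : 0 < M)
    (hwind : IsWindingNumber (fun t => F (circleMap 0 M t)) 0) :
    ∃ L : ℂ → ℂ, ContinuousOn L {0}ᶜ ∧ ∀ z ≠ 0, exp (L z) = F z := by
  obtain ⟨l, hl, hlF⟩ := exists_continuous_exp_eq (k := fun w => F (exp w))
    (hF.comp_continuous continuous_exp exp_ne_zero) fun z => hF0 _ (exp_ne_zero z)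
  have hcircle (t : ℝ) : exp (Real.log M + t * Complex.I) = circleMap 0 M t := by
    rw [exp_add, ← ofReal_exp, Real.exp_log hM, circleMap_zero]
  have hperiod : Function.Periodic l (2 * Real.pi * Complex.I) :=
    periodic_of_isWindingNumber_zero hl (fun w => by simp only [hlF, exp_periodic w])
      (a := Real.log M) (by simpa only [hlF, hcircle] using hwind)
  have hlog (w : ℂ) : l (log (exp w)) = l w := by
    obtain ⟨k, hk⟩ := exp_eq_exp_iff_exists_int.1 (exp_log (exp_ne_zero w))
    rw [hk]
    exact hperiod.int_mul k w
  refine ⟨l ∘ log, fun z hz => ContinuousAt.continuousWithinAt ?_, fun z hz => by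
    simp [hlF, exp_log hz]⟩
  rw [← exp_log hz]
  refine Tendsto.mono_left (tendsto_map'_iff.2 ?_) (isOpenMap_exp.nhds_le (log z))
  simpa [Function.comp_def, hlog] using hl.tendsto (log z)

end WindingNumber

section StandardMap

/-- The affine part of `stdSphereMap n`: `zⁿ` for `0 ≤ n` and `(conj z)⁻ⁿ` for `n < 0`. -/
noncomputable def stdPow (n : ℤ) (z : ℂ) : ℂ :=
  if 0 ≤ n then z ^ n.toNat else (starRingEnd ℂ) z ^ (-n).toNat

lemma stdPow_zero (z : ℂ) : stdPow 0 z = 1 := by simp [stdPow]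

lemma stdPow_natCast (k : ℕ) (z : ℂ) : stdPow k z = z ^ k := by simp [stdPow]

lemma stdPow_neg_natCast (k : ℕ) (z : ℂ) : stdPow (-k) z = (starRingEnd ℂ) z ^ k := by
  rcases k.eq_zero_or_pos with rfl | hk
  · simp [stdPow]
  · simp [stdPow, hk.ne']

lemma contDiff_stdPow (n : ℤ) : ContDiff ℝ 1 (stdPow n) := by
  unfold stdPow
  split_ifs
  · fun_prop
  · exact conjCLE.contDiff.pow _

lemma norm_stdPow (n : ℤ) (z : ℂ) : ‖stdPow n z‖ = ‖z‖ ^ n.natAbs := by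
  obtain ⟨k, rfl | rfl⟩ := n.eq_nat_or_neg
  · simp [stdPow_natCast]
  · simp [stdPow_neg_natCast]

lemma stdPow_ne_zero (n : ℤ) {z : ℂ} (hz : z ≠ 0) : stdPow n z ≠ 0 := by
  rw [← norm_ne_zero_iff, norm_stdPow]
  exact pow_ne_zero _ (norm_ne_zero_iff.2 hz)

lemma tendsto_norm_stdPow_cobounded {n : ℤ} (hn : n ≠ 0) :
    Tendsto (fun z => ‖stdPow n z‖) (Bornology.cobounded ℂ) atTop := by
  simp only [norm_stdPow]
  exact (tendsto_pow_atTop (Int.natAbs_ne_zero.2 hn)).comp tendsto_norm_cobounded_atTop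

lemma stdPow_ofReal_mul_exp (n : ℤ) (M t : ℝ) :
    stdPow n (M * exp (t * Complex.I)) = M ^ n.natAbs * exp (n * t * Complex.I) := by
  obtain ⟨k, rfl | rfl⟩ := n.eq_nat_or_neg
  · simp [stdPow_natCast, mul_pow, ← exp_nat_mul, mul_assoc]
  · simp [stdPow_neg_natCast, mul_pow, ← exp_conj, ← exp_nat_mul, mul_assoc]

lemma isWindingNumber_stdPow (n : ℤ) {M : ℝ} (hM : 0 < M) :
    IsWindingNumber (fun t => stdPow n (circleMap 0 M t)) n := by
  refine ⟨fun t => n * t, by fun_prop, fun t _ => ?_, by ring⟩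
  dsimp only
  rw [norm_stdPow, norm_circleMap_zero, abs_of_pos hM, circleMap_zero, stdPow_ofReal_mul_exp]
  push_cast
  ring

lemma stdSphereMap_coe (n : ℤ) (z : ℂ) : stdSphereMap n z = (stdPow n z : OnePoint ℂ) := by
  have hz : stdSphereMap n z = if n = 0 then ((1 : ℂ) : OnePoint ℂ) else if 0 < n then
    ((z ^ n.toNat : ℂ) : OnePoint ℂ) else ((starRingEnd ℂ z ^ (-n).toNat : ℂ) : OnePoint ℂ) := rfl
  rw [hz, stdPow]
  rcases lt_trichotomy n 0 with hn | rfl | hn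
  · simp [hn.ne, hn.not_gt, hn.not_ge]
  · simp
  · simp [hn.ne', hn, hn.le]

lemma stdSphereMap_infty {n : ℤ} (hn : n ≠ 0) : stdSphereMap n ∞ = ∞ := if_neg hn

lemma stdSphereMap_zero (x : OnePoint ℂ) : stdSphereMap 0 x = ((1 : ℂ) : OnePoint ℂ) := by
  induction x using OnePoint.rec with
  | infty => rfl
  | coe z => rw [stdSphereMap_coe, stdPow_zero]

lemma stdSphereMap_ne_zero (n : ℤ) {x : OnePoint ℂ} (hx : x ≠ ((0 : ℂ) : OnePoint ℂ)) :
    stdSphereMap n x ≠ ((0 : ℂ) : OnePoint ℂ) := by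
  induction x using OnePoint.rec with
  | infty =>
    by_cases hn : n = 0
    · simp [hn, stdSphereMap_zero]
    · simp [stdSphereMap_infty hn]
  | coe z =>
    rw [stdSphereMap_coe]
    exact OnePoint.coe_injective.ne (stdPow_ne_zero n (OnePoint.coe_injective.ne_iff.1 hx))

end StandardMap

section ExteriorDomain

lemma le_norm_max_smul {E : Type*} [NormedAddCommGroup E] [NormedSpace ℝ E] (M : ℝ) {z : E}
    (hz : z ≠ 0) : M ≤ ‖max 1 (M / ‖z‖) • z‖ := by
  rw [norm_smul, Real.norm_of_nonneg (zero_le_one.trans (le_max_left _ _)),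
    ← div_le_iff₀ (norm_pos_iff.2 hz)]
  exact le_max_right _ _

lemma max_smul_of_le_norm {E : Type*} [NormedAddCommGroup E] [NormedSpace ℝ E] {M : ℝ} {z : E}
    (hz : M ≤ ‖z‖) : max 1 (M / ‖z‖) • z = z := by
  rw [max_eq_left (div_le_one_of_le₀ hz (norm_nonneg z)), one_smul]

lemma exists_eq_stdPow_mul_exp {f : ℂ → ℂ} {M : ℝ} (hM : 0 < M)
    (hf : ContinuousOn f {z | M ≤ ‖z‖}) (hfM : ∀ z, M ≤ ‖z‖ → f z ≠ 0) {n : ℤ}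
    (hwind : IsWindingNumber (fun t => f (circleMap 0 M t)) n) :
    ∃ L : ℂ → ℂ, Continuous L ∧ ∀ z, M ≤ ‖z‖ → f z = stdPow n z * exp (L z) := by
  have h0 : ∀ z : ℂ, M ≤ ‖z‖ → z ≠ 0 := fun z hz => norm_pos_iff.1 (hM.trans_le hz)
  let ρ : ℂ → ℂ := fun z => max 1 (M / ‖z‖) • z
  have hρ : ContinuousOn ρ {0}ᶜ := by
    have : ∀ z ∈ ({0}ᶜ : Set ℂ), ‖z‖ ≠ 0 := fun z hz => norm_ne_zero_iff.2 hz
    fun_prop (disch := assumption)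
  have hρM : Set.MapsTo ρ {0}ᶜ {z | M ≤ ‖z‖} := fun z hz => le_norm_max_smul M hz
  have hF : ContinuousOn (fun z => f (ρ z) / stdPow n z) {0}ᶜ :=
    (hf.comp hρ hρM).div (contDiff_stdPow n).continuous.continuousOn
      fun z hz => stdPow_ne_zero n hz
  have hρcircle (t : ℝ) : ρ (circleMap 0 M t) = circleMap 0 M t :=
    max_smul_of_le_norm ((le_abs_self M).trans_eq (norm_circleMap_zero M t).symm)
  have hwind0 : IsWindingNumber
      (fun t => f (ρ (circleMap 0 M t)) / stdPow n (circleMap 0 M t)) 0 := by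
    simpa only [hρcircle, sub_self] using hwind.div (isWindingNumber_stdPow n hM)
  obtain ⟨L, hL, hLf⟩ := exists_continuousOn_exp_eq_of_isWindingNumber_zero hF
    (fun z hz => div_ne_zero (hfM _ (hρM hz)) (stdPow_ne_zero n hz)) hM hwind0
  obtain ⟨L', hL'⟩ := ContinuousMap.exists_restrict_eq (s := {z : ℂ | M ≤ ‖z‖})
    (isClosed_le continuous_const continuous_norm)
    ⟨_, (hL.mono fun z hz => h0 z hz).domRestrict⟩
  refine ⟨L', L'.continuous, fun z hz => ?_⟩
  have hLz : L' z = L z := congr($hL' ⟨z, hz⟩)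
  rw [hLz, hLf z (h0 z hz), mul_div_cancel₀ _ (stdPow_ne_zero n (h0 z hz))]
  exact congr_arg f (max_smul_of_le_norm hz).symm

end ExteriorDomain

section Deformation

open Asymptotics

lemma isLittleO_lineMap {α E F : Type*} [NormedAddCommGroup E] [NormedSpace ℝ E] [Norm F]
    {l : Filter α} {u v : α → E} {h : α → F} (hu : u =o[l] h) (hv : v =o[l] h) (l' : Filter I) :
    (fun p : I × α => AffineMap.lineMap (u p.2) (v p.2) (p.1 : ℝ)) =o[l' ×ˢ l]
      fun p => h p.2 := by
  have hsmul {c : I × α → ℝ} (hc : ∀ p, |c p| ≤ 1) {w : α → E} (hw : w =o[l] h) :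
      (fun p : I × α => c p • w p.2) =o[l' ×ˢ l] fun p => h p.2 :=
    (IsBigO.of_bound 1 (.of_forall fun p => by
      rw [norm_smul]
      exact mul_le_mul_of_nonneg_right (hc p) (norm_nonneg _))).trans_isLittleO
        (hw.comp_tendsto tendsto_snd)
  simp only [AffineMap.lineMap_apply_module]
  refine (hsmul (fun p => ?_) hu).add (hsmul (fun p => ?_) hv)
  · exact abs_le.2 ⟨by linarith [p.1.2.2], by linarith [p.1.2.1]⟩
  · exact abs_le.2 ⟨by linarith [p.1.2.1], p.1.2.2⟩

lemma HasDegree.of_lineMap {n : ℤ} {q q' : ℂ → ℂ × ℂ} {h : ℂ → ℂ} (hq : Continuous q)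
    (hq' : Continuous q') (hne : ∀ t : I, ∀ z, AffineMap.lineMap (q z) (q' z) (t : ℝ) ≠ 0)
    (hqh : (fun z => q z - (h z, 0)) =o[Bornology.cobounded ℂ] h)
    (hqh' : (fun z => q' z - (h z, 0)) =o[Bornology.cobounded ℂ] h)
    (hdeg : HasDegree (sphereMap q') n) : HasDegree (sphereMap q) n := by
  let Q : I → ℂ → ℂ × ℂ := fun t z => AffineMap.lineMap (q z) (q' z) (t : ℝ)
  have hQ : Continuous ↿Q := by
    simp only [Q, AffineMap.lineMap_apply_module, Function.HasUncurry.uncurry]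
    fun_prop
  have hinf (t : I) : (fun p : I × ℂ => (Q p.1 p.2).2) =o[𝓝 t ×ˢ Bornology.cobounded ℂ]
      fun p => (Q p.1 p.2).1 := by
    have hsub : (fun p : I × ℂ => Q p.1 p.2 - (h p.2, 0)) =o[𝓝 t ×ˢ Bornology.cobounded ℂ]
        fun p => h p.2 := (isLittleO_lineMap hqh hqh' (𝓝 t)).congr_left fun p => by
      simpa using (AffineMap.lineMap_vsub_lineMap (q p.2) (q' p.2) (h p.2, 0) (h p.2, 0) _).symm
    obtain ⟨hfst, hsnd⟩ := isLittleO_prod_left.1 hsub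
    simp only [sub_zero] at hsnd
    exact hsnd.trans_isBigO (IsEquivalent.isBigO_symm hfst)
  have hQ0 : Q 0 = q := by ext1 z; simp [Q]
  have hQ1 : Q 1 = q' := by ext1 z; simp [Q]
  rw [← hQ0]
  exact HasDegree.of_pair_homotopy hQ hne hinf (hQ1 ▸ hdeg)

lemma dense_forall_smul_add_ne_zero {E F : Type*} [NormedAddCommGroup E] [NormedSpace ℝ E]
    [FiniteDimensional ℝ E] [NormedAddCommGroup F] [NormedSpace ℝ F] [FiniteDimensional ℝ F]
    (hdim : Module.finrank ℝ E + 1 < Module.finrank ℝ F) {p p₀ : E → F} (hp : ContDiff ℝ 1 p)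
    (hp₀ : ContDiff ℝ 1 p₀) : Dense {v : F | ∀ (s : ℝ) z, s • p z + p₀ z + v ≠ 0} := by
  have hdim' : Module.finrank ℝ (ℝ × E) < Module.finrank ℝ F := by
    rwa [Module.finrank_prod, Module.finrank_self, add_comm]
  have hΦ : ContDiff ℝ 1 fun x : ℝ × E => -(x.1 • p x.2 + p₀ x.2) := by fun_prop
  refine (hΦ.dense_compl_range_of_finrank_lt_finrank hdim').mono ?_
  rintro v hv s z h0
  exact hv ⟨(s, z), neg_eq_of_add_eq_zero_right h0⟩

lemma lineMap_ne_zero_of_dist_lt {E : Type*} [NormedAddCommGroup E] [NormedSpace ℝ E] {x y : E}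
    (h : dist y x < ‖x‖) (t : I) : AffineMap.lineMap x y (t : ℝ) ≠ 0 := by
  intro h0
  have hdist := dist_lineMap_left x y (t : ℝ)
  rw [h0, dist_zero_left, Real.norm_of_nonneg t.2.1, dist_comm x] at hdist
  nlinarith [t.2.2, dist_nonneg (x := y) (y := x)]

lemma HasDegree.of_contDiff {n : ℤ} {p : ℂ → ℂ × ℂ} {h : ℂ → ℂ} (hp : ContDiff ℝ 1 p)
    (hp0 : ∀ z, p z ≠ 0) (hh : ContDiff ℝ 1 h)
    (hinf : Tendsto (fun z => ‖h z‖) (Bornology.cobounded ℂ) atTop)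
    (hph : (fun z => p z - (h z, 0)) =o[Bornology.cobounded ℂ] h)
    (hdeg : HasDegree (sphereMap fun z => (h z, 1)) n) : HasDegree (sphereMap p) n := by
  have hconst (v : ℂ × ℂ) : (fun _ => v) =o[Bornology.cobounded ℂ] h :=
    isLittleO_const_left.2 (Or.inr hinf)
  have hdim : Module.finrank ℝ ℂ + 1 < Module.finrank ℝ (ℂ × ℂ) := by
    simp [Module.finrank_prod]
  obtain ⟨v, hvre, hv⟩ := (dense_forall_smul_add_ne_zero hdim hp
    (hh.prodMk contDiff_const : ContDiff ℝ 1 fun z => (h z, (0 : ℂ)))).inter_open_nonempty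
      {v | 0 < v.2.re} (isOpen_lt continuous_const (by fun_prop)) ⟨(0, 1), by simp⟩
  have hshift : HasDegree (sphereMap fun z => (h z, 0) + v) n := by
    refine hdeg.of_lineMap (h := h) (by fun_prop) (by fun_prop) (fun t z h0 => ?_)
      ((hconst v).congr_left fun z => by simp) ((hconst (0, 1)).congr_left fun z => by simp)
    have hre : 0 < (AffineMap.lineMap ((h z, 0) + v) (h z, 1) (t : ℝ)).2.re := by
      rw [AffineMap.snd_lineMap]
      exact (convex_halfSpace_re_gt 0).lineMap_mem (by simpa using hvre) (by simp) t.2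
    simp [h0] at hre
  refine hshift.of_lineMap (by fun_prop) (by fun_prop) (fun t z h0 => ?_) hph
    ((hconst v).congr_left fun z => by simp)
  rw [AffineMap.lineMap_apply_module] at h0
  rcases eq_or_ne (t : ℝ) 0 with ht | ht
  · exact hp0 z (by simpa [ht] using h0)
  · refine hv ((t : ℝ)⁻¹ * (1 - t)) z ?_
    refine smul_right_injective _ ht ?_
    simpa [smul_smul, add_assoc, ht] using h0

-- A pair asymptotic to `(h, 0)` is deformed to `(h, 1)` through `(h, 0) + v` with `v` constant;
-- for a smooth pair almost every `v` avoids zeros along the way, by a dimension count.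
lemma HasDegree.of_isLittleO {n : ℤ} {q : ℂ → ℂ × ℂ} {h : ℂ → ℂ} (hq : Continuous q)
    (hq0 : ∀ z, q z ≠ 0) (hh : ContDiff ℝ 1 h)
    (hinf : Tendsto (fun z => ‖h z‖) (Bornology.cobounded ℂ) atTop)
    (hqh : (fun z => q z - (h z, 0)) =o[Bornology.cobounded ℂ] h)
    (hdeg : HasDegree (sphereMap fun z => (h z, 1)) n) : HasDegree (sphereMap q) n := by
  obtain ⟨p, hp, hpq, -⟩ := hq.exists_contDiff_approx 1 (ε := fun z => min 1 ‖q z‖)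
    (by fun_prop) fun z => lt_min one_pos (norm_pos_iff.2 (hq0 z))
  have hline (t : I) (z : ℂ) : AffineMap.lineMap (q z) (p z) (t : ℝ) ≠ 0 :=
    lineMap_ne_zero_of_dist_lt ((hpq z).trans_le (min_le_right _ _)) t
  have hph : (fun z => p z - (h z, 0)) =o[Bornology.cobounded ℂ] h := by
    have hpq1 : (fun z => p z - q z) =O[Bornology.cobounded ℂ] fun _ => (1 : ℝ) :=
      IsBigO.of_bound 1 (.of_forall fun z => by
        simpa [← dist_eq_norm] using (hpq z).le.trans (min_le_left _ _))
    refine ((hpq1.trans_isLittleO (isLittleO_const_left.2 (Or.inr hinf))).add hqh).congr_left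
      fun z => sub_add_sub_cancel _ _ _
  exact (HasDegree.of_contDiff hp (fun z => by simpa using hline 1 z) hh hinf hph hdeg).of_lineMap
    hq hp.continuous hline hqh hph

end Deformation

section DegreeOfWinding

open Asymptotics

lemma HasDegree.of_eventuallyEq_mul {n : ℤ} {f g a h : ℂ → ℂ} (hf : Continuous f)
    (hg : Continuous g) (hfg : ∀ z, (f z, g z) ≠ 0) (hgf : g =o[Bornology.cobounded ℂ] f)
    (ha : Continuous a) (ha0 : ∀ z, a z ≠ 0)
    (hafh : (fun z => a z * f z) =ᶠ[Bornology.cobounded ℂ] h) (hh : ContDiff ℝ 1 h)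
    (hinf : Tendsto (fun z => ‖h z‖) (Bornology.cobounded ℂ) atTop)
    (hdeg : HasDegree (sphereMap fun z => (h z, 1)) n) :
    HasDegree (sphereMap fun z => (f z, g z)) n := by
  rw [← sphereMap_smul ha0]
  refine HasDegree.of_isLittleO (by fun_prop) (fun z => smul_ne_zero (ha0 z) (hfg z)) hh hinf
    ?_ hdeg
  refine isLittleO_prod_left.2 ⟨?_, ?_⟩
  · exact hafh.isEquivalent.isLittleO
  · simpa using ((isBigO_refl a _).mul_isLittleO hgf).trans_eventuallyEq hafh

lemma hasDegree_sphereMap_stdPow {n : ℤ} (hn : n ≠ 0) :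
    HasDegree (sphereMap fun z => (stdPow n z, 1)) n := by
  have hone : (fun _ => (1 : ℂ)) =o[Bornology.cobounded ℂ] stdPow n :=
    isLittleO_const_left.2 (Or.inr (tendsto_norm_stdPow_cobounded hn))
  have hcont : Continuous fun p : I × OnePoint ℂ => sphereMap (fun z => (stdPow n z, 1)) p.2 :=
    continuous_sphereMap_family (q := fun _ z => (stdPow n z, 1))
      (((contDiff_stdPow n).continuous.comp continuous_snd).prodMk continuous_const)
      (by simp) fun _ => hone.comp_tendsto tendsto_snd
  refine ⟨_, hcont.comp continuous_swap, fun _ => rfl, fun x => ?_⟩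
  induction x using OnePoint.rec with
  | infty => exact (stdSphereMap_infty hn).symm
  | coe z => simp [stdSphereMap_coe]

lemma hasDegree_zero_const_infty : HasDegree (fun _ => ∞) 0 := by
  have hcont (t : I) : ContinuousAt projPoint ((1 : ℂ), ((t : ℝ) : ℂ)) :=
    continuousAt_projPoint (by simp)
  refine ⟨fun p => projPoint (1, ((p.2 : ℝ) : ℂ)), continuous_iff_continuousAt.2 fun p => ?_,
    by simp, by simp [stdSphereMap_zero]⟩
  exact (hcont p.2).comp (f := fun p : OnePoint ℂ × I => ((1 : ℂ), ((p.2 : ℝ) : ℂ)))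
    (by fun_prop)

lemma hasDegree_zero_of_forall_ne_zero {h : ℂ → ℂ} (hh : Continuous h) (h0 : ∀ z, h z ≠ 0)
    (hinf : Tendsto (fun z => ‖h z‖) (Bornology.cobounded ℂ) atTop) :
    HasDegree (sphereMap fun z => (h z, 1)) 0 := by
  have hinv : (fun z => (h z)⁻¹) =o[Bornology.cobounded ℂ] fun _ => (1 : ℂ) :=
    (isLittleO_one_iff ℂ).2 (tendsto_inv₀_cobounded.comp (tendsto_norm_atTop_iff_cobounded.1 hinf))
  have hconst : sphereMap (fun _ => ((1 : ℂ), 0)) = fun _ => ∞ := by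
    ext1 x
    induction x using OnePoint.rec <;> simp
  rw [← sphereMap_smul fun z => inv_ne_zero (h0 z)]
  refine HasDegree.of_lineMap (q' := fun _ => (1, 0)) (h := fun _ => 1) ?_ continuous_const
    (fun t z hz => ?_) ?_ ?_ (hconst ▸ hasDegree_zero_const_infty)
  · exact (hh.inv₀ h0).smul (by fun_prop)
  · simpa [h0] using congr(($hz).1)
  · exact isLittleO_prod_left.2 ⟨by simp [h0], by simpa using hinv⟩
  · simp

lemma hasDegree_of_isWindingNumber {f g : ℂ → ℂ} (hf : Continuous f) (hg : Continuous g)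
    (hfg : ∀ z, (f z, g z) ≠ 0) (hgf : g =o[Bornology.cobounded ℂ] f) {M : ℝ} (hM : 0 < M)
    (hfM : ∀ z, M ≤ ‖z‖ → f z ≠ 0) {n : ℤ}
    (hwind : IsWindingNumber (fun t => f (circleMap 0 M t)) n) :
    HasDegree (sphereMap fun z => (f z, g z)) n := by
  obtain ⟨L, hL, hLf⟩ := exists_eq_stdPow_mul_exp hM hf.continuousOn hfM hwind
  have hev : ∀ᶠ z in Bornology.cobounded ℂ, exp (-L z) * f z = stdPow n z := by
    filter_upwards [tendsto_norm_cobounded_atTop.eventually_ge_atTop M] with z hz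
    rw [hLf z hz, exp_neg, mul_comm, mul_inv_cancel_right₀ (exp_ne_zero _)]
  rcases eq_or_ne n 0 with rfl | hn
  -- The constant `stdPow 0` does not tend to `∞`, so it is rescaled by `1 + ‖z‖ ^ 2`.
  · have hinf : Tendsto (fun z : ℂ => 1 + ‖z‖ ^ 2) (Bornology.cobounded ℂ) atTop :=
      tendsto_atTop_add_const_left _ _
        ((tendsto_pow_atTop two_ne_zero).comp tendsto_norm_cobounded_atTop)
    let h : ℂ → ℂ := fun z => (1 + ‖z‖ ^ 2 : ℝ)
    have hh : ContDiff ℝ 1 h :=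
      ofRealCLM.contDiff.comp (contDiff_const.add (contDiff_norm_sq ℝ))
    have h0 : ∀ z, h z ≠ 0 := fun z => ofReal_ne_zero.2 (by positivity)
    have hnorm : Tendsto (fun z => ‖h z‖) (Bornology.cobounded ℂ) atTop :=
      hinf.congr fun z => by rw [norm_real, Real.norm_of_nonneg (by positivity)]
    refine HasDegree.of_eventuallyEq_mul hf hg hfg hgf (a := fun z => h z * exp (-L z))
      (hh.continuous.mul (by fun_prop)) (fun z => mul_ne_zero (h0 z) (exp_ne_zero _)) ?_ hh hnorm
      (hasDegree_zero_of_forall_ne_zero hh.continuous h0 hnorm)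
    filter_upwards [hev] with z hz
    rw [mul_assoc, hz, stdPow_zero, mul_one]
  · exact HasDegree.of_eventuallyEq_mul hf hg hfg hgf (by fun_prop) (fun _ => exp_ne_zero _)
      hev (contDiff_stdPow n) (tendsto_norm_stdPow_cobounded hn) (hasDegree_sphereMap_stdPow hn)

end DegreeOfWinding

section FiberwiseInjection

variable {𝕜 E X : Type*} [NontriviallyNormedField 𝕜] [NormedAddCommGroup E] [NormedSpace 𝕜 E]
  [TopologicalSpace X]

/-- For families of projections `P` and `Q`, regarded as the vector bundles over `X` formed by
their ranges: there is a continuous family of operators injecting each fibre of the first bundle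
into the fibre of the second over the same point. -/
def HasFiberwiseInjection (P Q : X → E →L[𝕜] E) : Prop :=
  ∃ T : X → E →L[𝕜] E, Continuous T ∧ ∀ x v, v ≠ 0 → P x v = v → T x v ≠ 0 ∧ Q x (T x v) = T x v

lemma HasFiberwiseInjection.trans {P Q R : X → E →L[𝕜] E} (h₁ : HasFiberwiseInjection P Q)
    (h₂ : HasFiberwiseInjection Q R) : HasFiberwiseInjection P R := by
  obtain ⟨T, hT, hPQ⟩ := h₁
  obtain ⟨S, hS, hQR⟩ := h₂
  refine ⟨fun x => (S x).comp (T x), hS.clm_comp hT, fun x v hv hPv => ?_⟩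
  have ⟨hTv, hQTv⟩ := hPQ x v hv hPv
  exact hQR x (T x v) hTv hQTv

lemma HasFiberwiseInjection.of_norm_sub_lt_one {P Q : X → E →L[𝕜] E} (hQ : Continuous Q)
    (hQ_idem : ∀ x v, Q x (Q x v) = Q x v) (h : ∀ x, ‖P x - Q x‖ < 1) :
    HasFiberwiseInjection P Q := by
  refine ⟨Q, hQ, fun x v hv hPv => ⟨fun hQv => ?_, hQ_idem x v⟩⟩
  have hlt : ‖(P x - Q x) v‖ < 1 * ‖v‖ :=
    ((P x - Q x).le_opNorm v).trans_lt (mul_lt_mul_of_pos_right (h x) (norm_pos_iff.2 hv))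
  simp [hPv, hQv] at hlt

lemma hasFiberwiseInjection_of_preconnectedSpace [CompactSpace X] {Y : Type*} [TopologicalSpace Y]
    [PreconnectedSpace Y] {P : Y → X → E →L[𝕜] E} (hP : Continuous ↿P)
    (hP_idem : ∀ y x v, P y x (P y x v) = P y x v) (y₀ y₁ : Y) :
    HasFiberwiseInjection (P y₀) (P y₁) := by
  have hslice (y : Y) : Continuous (P y) := hP.comp (Continuous.prodMk_right y)
  have htrans : IsTrans Y fun y z => HasFiberwiseInjection (P y) (P z) :=
    ⟨fun _ _ _ h₁ h₂ => h₁.trans h₂⟩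
  refine PreconnectedSpace.induction₂' (fun y z => HasFiberwiseInjection (P y) (P z))
    (fun y => ?_) htrans y₀ y₁
  have hclose : ∀ᶠ z in 𝓝 y, ∀ x ∈ Set.univ, ‖P y x - P z x‖ < 1 := by
    refine isCompact_univ.eventually_forall_of_forall_eventually fun x _ => ?_
    have hcont : Continuous fun p : Y × X => ‖P y p.2 - P p.1 p.2‖ :=
      (((hslice y).comp continuous_snd).sub hP).norm
    exact hcont.continuousAt.eventually_lt_const (by simp)
  filter_upwards [hclose] with z hz
  exact ⟨.of_norm_sub_lt_one (hslice z) (hP_idem z) fun x => hz x (Set.mem_univ x),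
    .of_norm_sub_lt_one (hslice y) (hP_idem y) fun x =>
      norm_sub_rev (P z x) (P y x) ▸ hz x (Set.mem_univ x)⟩

end FiberwiseInjection

section LineProjection

variable {K : Type*} [RCLike K]

/-- The orthogonal projection of `K²` onto the line spanned by `q ≠ 0`. -/
noncomputable def lineProj (q : K × K) : K × K →L[K] K × K :=
  ((star q.1 * q.1 + star q.2 * q.2)⁻¹ • (star q.1 • ContinuousLinearMap.fst K K K +
    star q.2 • ContinuousLinearMap.snd K K K)).smulRight q

lemma lineProj_apply (q v : K × K) : lineProj q v =
    ((star q.1 * v.1 + star q.2 * v.2) / (star q.1 * q.1 + star q.2 * q.2)) • q := by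
  rw [div_eq_inv_mul]
  rfl

lemma star_mul_self_add_star_mul_self_ne_zero {q : K × K} (hq : q ≠ 0) :
    star q.1 * q.1 + star q.2 * q.2 ≠ 0 := by
  simp only [RCLike.star_def, RCLike.conj_mul]
  norm_cast
  contrapose! hq
  have h := (add_eq_zero_iff_of_nonneg (sq_nonneg ‖q.1‖) (sq_nonneg ‖q.2‖)).1 hq
  simpa [Prod.ext_iff] using h

lemma lineProj_self {q : K × K} (hq : q ≠ 0) : lineProj q q = q := by
  rw [lineProj_apply, div_self (star_mul_self_add_star_mul_self_ne_zero hq), one_smul]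

lemma lineProj_lineProj {q : K × K} (hq : q ≠ 0) (v : K × K) :
    lineProj q (lineProj q v) = lineProj q v := by
  rw [lineProj_apply q v, (lineProj q).map_smul, lineProj_self hq]

lemma lineProj_smul {a : K} (ha : a ≠ 0) (q : K × K) : lineProj (a • q) = lineProj q := by
  have ha' : star a ≠ 0 := star_ne_zero.2 ha
  refine ContinuousLinearMap.ext fun v => ?_
  simp only [lineProj_apply, Prod.smul_fst, Prod.smul_snd, smul_eq_mul, star_mul', smul_smul]
  congr 1
  field_simp

lemma continuousAt_lineProj {q : K × K} (hq : q ≠ 0) : ContinuousAt lineProj q := by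
  have := star_mul_self_add_star_mul_self_ne_zero hq
  change ContinuousAt (fun q : K × K => ContinuousLinearMap.smulRightL K (K × K) (K × K)
    ((star q.1 * q.1 + star q.2 * q.2)⁻¹ • (star q.1 • ContinuousLinearMap.fst K K K +
      star q.2 • ContinuousLinearMap.snd K K K)) q) q
  fun_prop (disch := assumption)

/-- Homogeneous coordinates of a point of the projective line. -/
def homogCoords (x : OnePoint K) : K × K := x.elim (1, 0) fun w => (w, 1)

lemma homogCoords_ne_zero (x : OnePoint K) : homogCoords x ≠ 0 := by
  induction x using OnePoint.rec <;> simp [homogCoords, Prod.ext_iff]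

lemma projPoint_homogCoords (x : OnePoint K) : projPoint (homogCoords x) = x := by
  induction x using OnePoint.rec <;> simp [homogCoords]

lemma exists_eq_smul_homogCoords_projPoint (q : K × K) :
    ∃ c : K, q = c • homogCoords (projPoint q) := by
  by_cases h : q.2 = 0
  · exact ⟨q.1, by simp [projPoint_of_snd_eq_zero h, homogCoords, Prod.ext_iff, h]⟩
  · exact ⟨q.2, by simp [projPoint_of_snd_ne_zero h, homogCoords, mul_div_cancel₀ _ h]⟩

lemma lineProj_homogCoords_eq_self_iff {q : K × K} (hq : q ≠ 0) (x : OnePoint K) :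
    lineProj (homogCoords x) q = q ↔ projPoint q = x := by
  constructor
  · intro h
    rw [lineProj_apply] at h
    rw [← h, projPoint_smul (left_ne_zero_of_smul (h ▸ hq)), projPoint_homogCoords]
  · rintro rfl
    obtain ⟨c, hc⟩ := exists_eq_smul_homogCoords_projPoint q
    nth_rw 2 [hc]
    rw [ContinuousLinearMap.map_smul, lineProj_self (homogCoords_ne_zero _), ← hc]

lemma continuous_lineProj_homogCoords :
    Continuous fun x : OnePoint K => lineProj (homogCoords x) := by
  rw [OnePoint.continuous_iff]
  constructor
  · rw [coclosedCompact_eq_cocompact, ← Metric.cobounded_eq_cocompact]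
    have hinv : Tendsto (fun w : K => ((1, w⁻¹) : K × K)) (Bornology.cobounded K) (𝓝 (1, 0)) :=
      tendsto_const_nhds.prodMk_nhds tendsto_inv₀_cobounded
    refine ((continuousAt_lineProj (q := (1, 0)) (by simp)).tendsto.comp hinv).congr' ?_
    filter_upwards [Bornology.eventually_ne_cobounded 0] with w hw
    have hsmul : ((w, 1) : K × K) = w • (1, w⁻¹) := by simp [hw]
    exact (hsmul ▸ lineProj_smul hw _).symm
  · refine continuous_iff_continuousAt.2 fun w => ?_
    exact ContinuousAt.comp (f := fun w : K => (w, 1)) (continuousAt_lineProj (by simp))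
      (by fun_prop)

lemma exists_continuous_transport {X : Type*} [TopologicalSpace X] [CompactSpace X]
    {H : X × I → OnePoint K} (hH : Continuous H) :
    ∃ T : X → K × K →L[K] K × K, Continuous T ∧
      ∀ x q, q ≠ 0 → projPoint q = H (x, 0) → T x q ≠ 0 ∧ projPoint (T x q) = H (x, 1) := by
  obtain ⟨T, hT, hTH⟩ := hasFiberwiseInjection_of_preconnectedSpace
    (P := fun t x => lineProj (homogCoords (H (x, t))))
    (continuous_lineProj_homogCoords.comp (hH.comp continuous_swap))
    (fun t x => lineProj_lineProj (homogCoords_ne_zero (H (x, t)))) 0 1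
  refine ⟨T, hT, fun x q hq hqH => ?_⟩
  have ⟨hTq, hTqH⟩ := hTH x q hq ((lineProj_homogCoords_eq_self_iff hq _).2 hqH)
  exact ⟨hTq, (lineProj_homogCoords_eq_self_iff hTq _).1 hTqH⟩

end LineProjection

section ChartAtInfinity

variable {K : Type*} [NormedField K]

lemma le_norm_inv_of_mem_closedBall {w : K} {M : ℝ} (hM : 0 < M) (hw0 : w ≠ 0)
    (hw : w ∈ Metric.closedBall 0 M⁻¹) : M ≤ ‖w⁻¹‖ := by
  rw [norm_inv]
  exact (le_inv_comm₀ hM (norm_pos_iff.2 hw0)).2 (mem_closedBall_zero_iff.1 hw)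

variable [DecidableEq K]

/-- A function `k` vanishing at `∞`, expressed in the coordinate `z⁻¹` at `∞`. -/
def chartAtInfty (k : K → K) : K → K := Function.update (fun w => k w⁻¹) 0 0

@[simp] lemma chartAtInfty_zero (k : K → K) : chartAtInfty k 0 = 0 := Function.update_self ..

lemma chartAtInfty_of_ne_zero (k : K → K) {w : K} (hw : w ≠ 0) : chartAtInfty k w = k w⁻¹ :=
  Function.update_of_ne hw ..

lemma continuousOn_chartAtInfty {k : K → K} {M : ℝ} (hM : 0 < M)
    (hk : ContinuousOn k {z | M ≤ ‖z‖}) (hk0 : Tendsto k (Bornology.cobounded K) (𝓝 0)) :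
    ContinuousOn (chartAtInfty k) (Metric.closedBall 0 M⁻¹) :=
  continuousOn_update_iff.2
    ⟨hk.comp (continuousOn_inv₀.mono fun _ hw => hw.2) fun _ hw =>
        le_norm_inv_of_mem_closedBall hM hw.2 hw.1,
      fun _ => (hk0.comp tendsto_inv₀_nhdsNE_zero).mono_left (nhdsWithin_mono _ fun _ hw => hw.2)⟩

lemma sphereMap_projPoint_one {f g : K → K} {w : K} (hw : w ≠ 0 → f w⁻¹ ≠ 0) :
    sphereMap (fun z => (f z, g z)) (projPoint (1, w)) =
      projPoint (1, chartAtInfty (fun z => g z / f z) w) := by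
  by_cases hw0 : w = 0
  · simp [hw0]
  · have hfw := hw hw0
    rw [projPoint_of_snd_ne_zero hw0, sphereMap_coe, chartAtInfty_of_ne_zero _ hw0, one_div,
      ← projPoint_smul hfw (1, _)]
    simp [mul_div_cancel₀ _ hfw]

end ChartAtInfinity

section WindingOfDegree

lemma isWindingNumber_of_mul_inv_eq {f a b : ℂ → ℂ} {M : ℝ} (hM : 0 < M) {n : ℤ}
    (ha : ContinuousOn a (Metric.closedBall 0 M)) (ha0 : ∀ z ∈ Metric.closedBall 0 M, a z ≠ 0)
    (hb : ContinuousOn b (Metric.closedBall 0 M⁻¹)) (hb0 : ∀ w ∈ Metric.closedBall 0 M⁻¹, b w ≠ 0)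
    (hfab : ∀ z ∈ Metric.sphere 0 M, f z * b z⁻¹ = stdPow n z * a z) :
    IsWindingNumber (fun t => f (circleMap 0 M t)) n := by
  have hinv (t : ℝ) : (circleMap 0 M t)⁻¹ ∈ Metric.closedBall 0 M⁻¹ := by
    simp [abs_of_pos hM]
  have hzero_a : IsWindingNumber (fun t => a (circleMap 0 M t)) 0 :=
    isWindingNumber_zero_of_mapsTo_closedBall hM ha ha0 (continuous_circleMap 0 M)
      (circleMap_mem_closedBall 0 hM.le) (periodic_circleMap 0 M).eq
  have hzero_b : IsWindingNumber (fun t => b (circleMap 0 M t)⁻¹) 0 :=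
    isWindingNumber_zero_of_mapsTo_closedBall (inv_pos.2 hM) hb hb0
      ((continuous_circleMap 0 M).inv₀ fun t => circleMap_ne_center hM.ne') hinv
      congr($((periodic_circleMap 0 M).eq)⁻¹)
  have hquot := ((isWindingNumber_stdPow n hM).mul hzero_a).div hzero_b
  rw [add_zero, sub_zero] at hquot
  refine hquot.congr fun t _ => ?_
  exact (eq_div_of_mul_eq (hb0 _ (hinv t)) (hfab _ (circleMap_mem_sphere 0 hM.le t))).symm

-- A homotopy from `[f : g]` to `[stdPow n : 1]` carries `(f z, g z)` to `a z • (stdPow n z, 1)`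
-- over `ℂ` and `(1, g z / f z)` to a vector with first entry `b z⁻¹ ≠ 0` over the disc `M ≤ ‖z‖`
-- around `∞`. Linearity on the common circle gives `f z * b z⁻¹ = stdPow n z * a z`.
lemma isWindingNumber_of_hasDegree {f g : ℂ → ℂ} (hf : Continuous f) (hg : Continuous g)
    (hfg : ∀ z, (f z, g z) ≠ 0) (hgf : g =o[Bornology.cobounded ℂ] f) {M : ℝ} (hM : 0 < M)
    (hfM : ∀ z, M ≤ ‖z‖ → f z ≠ 0) {n : ℤ} (h : HasDegree (sphereMap fun z => (f z, g z)) n) :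
    IsWindingNumber (fun t => f (circleMap 0 M t)) n := by
  obtain ⟨H, hH, hH0, hH1⟩ := h
  obtain ⟨T, hT, hTH⟩ := exists_continuous_transport hH
  simp only [hH0, hH1] at hTH
  let k := chartAtInfty fun z => g z / f z
  have hk : ContinuousOn k (Metric.closedBall 0 M⁻¹) :=
    continuousOn_chartAtInfty hM (hg.continuousOn.div hf.continuousOn hfM)
      hgf.tendsto_div_nhds_zero
  have ha (z : ℂ) : (T z (f z, g z)).2 ≠ 0 ∧
      (T z (f z, g z)).1 = stdPow n z * (T z (f z, g z)).2 :=
    projPoint_eq_coe_iff.1 ((hTH z _ (hfg z) rfl).2.trans (stdSphereMap_coe n z))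
  have hb (w : ℂ) (hw : w ∈ Metric.closedBall 0 M⁻¹) : (T (projPoint (1, w)) (1, k w)).1 ≠ 0 := by
    have ⟨hne, heq⟩ := hTH (projPoint (1, w)) (1, k w) (by simp) (sphereMap_projPoint_one
      fun hw0 => hfM _ (le_norm_inv_of_mem_closedBall hM hw0 hw)).symm
    refine fst_ne_zero_of_projPoint_ne_zero hne (heq ▸ stdSphereMap_ne_zero n fun h => ?_)
    simpa using (projPoint_eq_coe_iff.1 h).2
  have hchart : Continuous fun w : ℂ => projPoint (1, w) := continuous_iff_continuousAt.2 fun w =>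
    ContinuousAt.comp (f := fun w : ℂ => (1, w)) (continuousAt_projPoint (by simp)) (by fun_prop)
  refine isWindingNumber_of_mul_inv_eq hM (a := fun z => (T z (f z, g z)).2)
    (b := fun w => (T (projPoint (1, w)) (1, k w)).1) ?_ (fun z _ => (ha z).1) ?_ hb fun z hz => ?_
  · exact (((hT.comp OnePoint.continuous_coe).clm_apply (hf.prodMk hg)).snd).continuousOn
  · exact ((hT.comp hchart).continuousOn.clm_apply (continuousOn_const.prodMk hk)).fst
  · have hz0 : z ≠ 0 := Metric.ne_of_mem_sphere hz hM.ne'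
    have hsmul : (f z, g z) = f z • (1, k z⁻¹) := by
      simp [k, chartAtInfty_of_ne_zero _ (inv_ne_zero hz0),
        mul_div_cancel₀ _ (hfM z (mem_sphere_zero_iff_norm.1 hz).ge)]
    have hpt : projPoint (1, z⁻¹) = (z : OnePoint ℂ) := by
      simp [projPoint_of_snd_ne_zero, hz0]
    rw [← (ha z).2, hpt, hsmul, ContinuousLinearMap.map_smul, Prod.smul_fst, smul_eq_mul]

end WindingOfDegree

/-- **Theorem 1.** Let `f, g : ℂ → ℂ` be continuous with no common zeros, with
`f(z)/g(z) → ∞` as `|z| → ∞`, and `f(z) ≠ 0` for `|z| ≥ M` (`M > 0`).  Let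
`R : ℂ̄ → ℂ̄` be the continuous map equal to `f/g` where `g ≠ 0` and to `∞` where
`g = 0` and at `∞`.  Then the degree of `R` equals the winding number about `0`
of the loop `φ ↦ f(M e^{iφ})`, `φ ∈ [0, 2π]`. -/
theorem degree_eq_winding_number_of_boundary_loop
    (f g : ℂ → ℂ) (hf : Continuous f) (hg : Continuous g)
    (hfg : ∀ z : ℂ, ¬(f z = 0 ∧ g z = 0))
    (hlim : ∀ C : ℝ, 0 < C → ∃ r : ℝ, 0 < r ∧ ∀ z : ℂ, r ≤ ‖z‖ → C * ‖g z‖ ≤ ‖f z‖)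
    (M : ℝ) (hM : 0 < M) (hfM : ∀ z : ℂ, M ≤ ‖z‖ → f z ≠ 0)
    (R : OnePoint ℂ → OnePoint ℂ) (hRcont : Continuous R)
    (hR₁ : ∀ z : ℂ, g z ≠ 0 → R z = ((f z / g z : ℂ) : OnePoint ℂ))
    (hR₂ : ∀ z : ℂ, g z = 0 → R z = ∞)
    (hRinf : R ∞ = ∞) :
    ∀ n : ℤ, HasDegree R n ↔
      IsWindingNumber (fun φ : ℝ => f ((M : ℂ) * Complex.exp ((φ : ℂ) * Complex.I))) n := by
  have hlittle : g =o[Bornology.cobounded ℂ] f := by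
    refine Asymptotics.isLittleO_iff.2 fun c hc => ?_
    obtain ⟨r, -, hr⟩ := hlim c⁻¹ (inv_pos.2 hc)
    filter_upwards [tendsto_norm_cobounded_atTop.eventually_ge_atTop r] with z hz
    exact (inv_mul_le_iff₀ hc).1 (hr z hz)
  have hpair (z : ℂ) : (f z, g z) ≠ 0 := fun h => hfg z (Prod.ext_iff.1 h)
  have hR : R = sphereMap fun z => (f z, g z) := by
    ext1 x
    induction x using OnePoint.rec with
    | infty => exact hRinf
    | coe z =>
      rw [sphereMap_coe]
      by_cases hz : g z = 0
      · rw [hR₂ z hz, projPoint_of_snd_eq_zero hz]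
      · rw [hR₁ z hz, projPoint_of_snd_ne_zero hz]
  intro n
  simp only [hR, ← circleMap_zero]
  exact ⟨isWindingNumber_of_hasDegree hf hg hpair hlittle hM hfM,
    hasDegree_of_isWindingNumber hf hg hpair hlittle hM hfM⟩
end

section
/- Let f(z, z̄) and g(z, z̄) be complex polynomials in z and z̄ with no common zeros, with deg f ≥ deg g. Let d = deg f and let T(z, z̄) be the homogeneous component of f of degree d. Assume |T(z, z̄)| → ∞ as |z| → ∞. Let R : ℂ̄ → ℂ̄ be the continuous map defined by R(z) = f(z,z̄)/g(z,z̄) when g(z,z̄) ≠ 0, R(z) = ∞ when g(z,z̄) = 0, and R(∞) = lim_{|z|→∞} f/g. Then the degree of R equals the number of roots, counted with multiplicity, of the one-variable polynomial T̃(z) = z^d · T(z, z^{-1}) lying in the open unit disk, minus d. -/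
open Complex Topology unitInterval Filter OnePoint
open scoped OnePoint

/-- Evaluation of a polynomial `f(z, z̄)` in `z` and `z̄` at the point `z ∈ ℂ`
(the first variable gets `z`, the second gets `z̄`). -/
noncomputable def evalZZbar (f : MvPolynomial (Fin 2) ℂ) (z : ℂ) : ℂ :=
  MvPolynomial.eval ![z, (starRingEnd ℂ) z] f

/-!
A transversality argument shows that, for suitable constants `e` and `c ≠ 0`, the homogeneous
coordinates `[f + t e : (1 - t) g + t c]` never vanish simultaneously, so `R` is homotopic to the
map `(f + e) / c` with the single pole `∞`: the pairs `(e, c)` to be avoided are the values of a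
`C¹` map on the three-dimensional space `ℂ × ℝ`, which cannot fill `ℂ²`. Near `∞` this map is
dominated by its leading part `T / c`, whose homotopy class depends only on the homotopy class of
`T : S¹ → ℂ \ {0}`. On the unit circle `T w = conj w ^ d * T̃ w`, and moving the roots of `T̃` in
the disk to `0` and pushing the others to infinity turns this into `conj w ^ d * w ^ N`, where `N`
is the number of roots in the disk.
-/

open Asymptotics Polynomial

section FreelyHomotopic

variable {X Y : Type*} [TopologicalSpace X] [TopologicalSpace Y] {A B C : X → Y}

/-- Two maps are freely homotopic: the unbundled form of `ContinuousMap.Homotopic`, which lets maps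
be given by formulas, their continuity being part of the assertion. -/
def FreelyHomotopic (A B : X → Y) : Prop :=
  ∃ (hA : Continuous A) (hB : Continuous B), ContinuousMap.Homotopic ⟨A, hA⟩ ⟨B, hB⟩

theorem FreelyHomotopic.of_continuous {H : I × X → Y} (hH : Continuous H)
    (h₀ : ∀ x, H (0, x) = A x) (h₁ : ∀ x, H (1, x) = B x) : FreelyHomotopic A B := by
  obtain rfl : (fun x => H (0, x)) = A := funext h₀
  obtain rfl : (fun x => H (1, x)) = B := funext h₁
  exact ⟨by fun_prop, by fun_prop, ⟨⟨⟨H, hH⟩, fun _ => rfl, fun _ => rfl⟩⟩⟩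

theorem FreelyHomotopic.trans (h₁ : FreelyHomotopic A B) (h₂ : FreelyHomotopic B C) :
    FreelyHomotopic A C :=
  ⟨h₁.1, h₂.2.1, h₁.2.2.trans h₂.2.2⟩

theorem FreelyHomotopic.hasDegree {R : OnePoint ℂ → OnePoint ℂ} {n : ℤ}
    (h : FreelyHomotopic R (stdSphereMap n)) : HasDegree R n := by
  obtain ⟨_, _, ⟨F⟩⟩ := h
  exact ⟨fun p => F (p.2, p.1), by fun_prop, F.apply_zero, F.apply_one⟩

end FreelyHomotopic

section OnePoint

theorem continuous_prod_onePoint {X Y Z : Type*} [TopologicalSpace X] [TopologicalSpace Y]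
    [TopologicalSpace Z] {H : Y × OnePoint X → Z}
    (hcoe : Continuous fun p : Y × X => H (p.1, p.2)) (hinfty : Continuous fun y => H (y, ∞))
    (hlim : ∀ y, Tendsto (fun p : Y × X => H (p.1, p.2)) (𝓝 y ×ˢ coclosedCompact X)
      (𝓝 (H (y, ∞)))) : Continuous H := by
  rw [continuous_iff_continuousAt]
  rintro ⟨y, x⟩
  induction x using OnePoint.rec with
  | infty =>
    rw [ContinuousAt, nhds_prod_eq, OnePoint.nhds_infty_eq, Filter.prod_sup, tendsto_sup]
    constructor
    · rw [← Filter.map_id (f := 𝓝 y), Filter.prod_map_map_eq, tendsto_map'_iff]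
      exact hlim y
    · rw [Filter.prod_pure, tendsto_map'_iff]
      exact hinfty.continuousAt
  | coe x =>
    have hemb : IsOpenEmbedding (Prod.map (id : Y → Y) ((↑) : X → OnePoint X)) :=
      IsOpenEmbedding.id.prodMap OnePoint.isOpenEmbedding_coe
    exact (hemb.continuousAt_iff (x := (y, x))).1 hcoe.continuousAt

variable {X E : Type*} [TopologicalSpace X] [R1Space X] [NormedAddCommGroup E] [ProperSpace E]

theorem freelyHomotopic_map_of_le_norm {A B : X → E} {H : I × X → E} {h : X → ℝ}
    (hH : Continuous H) (h₀ : ∀ x, H (0, x) = A x) (h₁ : ∀ x, H (1, x) = B x)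
    (hh : Tendsto h (cocompact X) atTop) (hle : ∀ᶠ x in cocompact X, ∀ t, h x ≤ ‖H (t, x)‖) :
    FreelyHomotopic (OnePoint.map A) (OnePoint.map B) := by
  have hlim (t : I) : Tendsto H (𝓝 t ×ˢ cocompact X) (cocompact E) := by
    rw [← Metric.cobounded_eq_cocompact, ← tendsto_norm_atTop_iff_cobounded]
    refine tendsto_atTop_mono' _ ?_ (hh.comp tendsto_snd)
    filter_upwards [hle.prod_inr (𝓝 t)] with p hp using hp p.1
  refine .of_continuous (H := fun p => p.2.map fun x => H (p.1, x))
    (continuous_prod_onePoint ?_ continuous_const fun t => ?_) (fun x => ?_) (fun x => ?_)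
  · exact OnePoint.continuous_coe.comp hH
  · rw [coclosedCompact_eq_cocompact]
    refine Tendsto.comp ?_ (hlim t)
    rw [← coclosedCompact_eq_cocompact]
    exact OnePoint.tendsto_coe_infty
  · exact congrArg (fun F => x.map F) (funext h₀)
  · exact congrArg (fun F => x.map F) (funext h₁)

variable [NormedSpace ℝ E] {A B : X → E}

theorem freelyHomotopic_map_of_isEquivalent (hA : Continuous A) (hB : Continuous B)
    (hAB : A ~[cocompact X] B) (hlim : Tendsto (‖B ·‖) (cocompact X) atTop) :
    FreelyHomotopic (OnePoint.map A) (OnePoint.map B) := by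
  refine freelyHomotopic_map_of_le_norm
    (H := fun p => B p.2 + (1 - (p.1 : ℝ)) • (A p.2 - B p.2)) (by fun_prop) (by simp) (by simp)
    (hlim.atTop_div_const two_pos) ?_
  filter_upwards [hAB.isLittleO.bound one_half_pos] with x hx t
  have hsmul : ‖(1 - (t : ℝ)) • (A x - B x)‖ ≤ ‖A x - B x‖ := by
    rw [norm_smul, Real.norm_of_nonneg (unitInterval.one_minus_nonneg t)]
    exact mul_le_of_le_one_left (norm_nonneg _) (unitInterval.one_minus_le_one t)
  have htri := norm_sub_le_norm_add (B x) ((1 - (t : ℝ)) • (A x - B x))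
  simp only [Pi.sub_apply] at hx
  linarith

theorem freelyHomotopic_map_of_sameRay (hA : Continuous A) (hB : Continuous B)
    (hAB : ∀ x, SameRay ℝ (A x) (B x)) (hAlim : Tendsto (‖A ·‖) (cocompact X) atTop)
    (hBlim : Tendsto (‖B ·‖) (cocompact X) atTop) :
    FreelyHomotopic (OnePoint.map A) (OnePoint.map B) := by
  refine freelyHomotopic_map_of_le_norm (h := fun x => min ‖A x‖ ‖B x‖)
    (H := fun p => (1 - (p.1 : ℝ)) • A p.2 + (p.1 : ℝ) • B p.2) (by fun_prop) (by simp) (by simp)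
    (tendsto_atTop.2 fun b => ?_) (.of_forall fun x t => ?_)
  · filter_upwards [hAlim.eventually_ge_atTop b, hBlim.eventually_ge_atTop b] with x using le_min
  · have hray : SameRay ℝ ((1 - (t : ℝ)) • A x) ((t : ℝ) • B x) :=
      ((hAB x).nonneg_smul_left (unitInterval.one_minus_nonneg t)).nonneg_smul_right t.2.1
    rw [hray.norm_add, norm_smul, norm_smul, Real.norm_of_nonneg (unitInterval.one_minus_nonneg t),
      Real.norm_of_nonneg t.2.1]
    exact Convex.min_le_combo _ _ (unitInterval.one_minus_nonneg t) t.2.1 (by ring)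

end OnePoint

section HomogeneousCoordinates

variable {K : Type*} [DivisionRing K]

open Classical in
/-- The point of `OnePoint K`, viewed as the projective line, with homogeneous coordinates
`[p.1 : p.2]`. The pair `(0, 0)`, which represents no point, is sent to `∞`. -/
noncomputable def homogPoint (p : K × K) : OnePoint K :=
  if p.2 = 0 then ∞ else ((p.1 / p.2 : K) : OnePoint K)

theorem homogPoint_zero_right (a : K) : homogPoint (a, 0) = ∞ := by simp [homogPoint]

theorem homogPoint_of_ne_zero (a : K) {b : K} (hb : b ≠ 0) : homogPoint (a, b) = ↑(a / b) := by
  simp [homogPoint, hb]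

theorem eq_homogPoint {x : OnePoint K} {a b : K} (hne : b ≠ 0 → x = ↑(a / b)) (h₀ : b = 0 → x = ∞) :
    x = homogPoint (a, b) := by
  rcases eq_or_ne b 0 with hb | hb
  · rw [h₀ hb, hb, homogPoint_zero_right]
  · rw [hne hb, homogPoint_of_ne_zero a hb]

theorem homogPoint_one_div {a b : K} (ha : a ≠ 0) :
    homogPoint (1, b / a) = homogPoint (a, b) := by
  by_cases hb : b = 0 <;> simp [homogPoint, ha, hb]

theorem homogPoint_one_injective : Function.Injective fun b : K => homogPoint (1, b) := by
  intro b c h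
  by_cases hb : b = 0 <;> by_cases hc : c = 0 <;> simp_all [homogPoint]

end HomogeneousCoordinates

section HomogeneousCoordinatesHomotopy

variable {K : Type*} [NormedField K]

theorem continuousAt_homogPoint {p : K × K} (hp : p ≠ 0) : ContinuousAt homogPoint p := by
  obtain ⟨a, b⟩ := p
  rcases eq_or_ne b 0 with rfl | hb
  · have ha : a ≠ 0 := fun ha => hp (by simp [ha])
    rw [ContinuousAt, homogPoint_zero_right, OnePoint.hasBasis_nhds_infty.tendsto_right_iff]
    rintro s ⟨-, hs⟩
    obtain ⟨M, hM⟩ := hs.isBounded.exists_norm_le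
    have hcont : Continuous fun q : K × K => ‖q.1‖ - M * ‖q.2‖ := by fun_prop
    have hpos : 0 < ‖a‖ - M * ‖(0 : K)‖ := by simpa using ha
    filter_upwards [hcont.continuousAt.eventually (lt_mem_nhds hpos)] with ⟨x, y⟩ hxy
    rcases eq_or_ne y 0 with rfl | hy
    · exact Or.inr (homogPoint_zero_right x)
    · refine Or.inl ⟨x / y, fun hmem => ?_, (homogPoint_of_ne_zero x hy).symm⟩
      have hquot := hM _ hmem
      rw [norm_div, div_le_iff₀ (norm_pos_iff.2 hy)] at hquot
      exact (sub_pos.1 hxy).not_ge hquot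
  · have hcoe : ContinuousAt (fun q : K × K => ((q.1 / q.2 : K) : OnePoint K)) (a, b) :=
      OnePoint.continuous_coe.continuousAt.comp (continuousAt_fst.div continuousAt_snd hb)
    refine hcoe.congr ?_
    filter_upwards [continuousAt_snd.eventually_ne hb] with q hq
    exact (homogPoint_of_ne_zero q.1 hq).symm

theorem continuous_homogPoint_one : Continuous fun b : K => homogPoint (1, b) :=
  continuous_iff_continuousAt.2 fun b =>
    (continuousAt_homogPoint (p := (1, b)) (by simp)).comp (by fun_prop)

variable {X : Type*} [TopologicalSpace X] [R1Space X]

theorem freelyHomotopic_of_homogPoint {A B : OnePoint X → OnePoint K} {P Q : I × X → K} {L : I → K}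
    {N : I × X → K} (hP : Continuous P) (hQ : Continuous Q) (hL : Continuous L)
    (hPQ : ∀ p, (P p, Q p) ≠ 0)
    (hPN : ∀ t, Tendsto (fun p => P p / N p) (𝓝 t ×ˢ cocompact X) (𝓝 1))
    (hQN : ∀ t, Tendsto (fun p => Q p / N p) (𝓝 t ×ˢ cocompact X) (𝓝 (L t)))
    (hA : ∀ x : X, A x = homogPoint (P (0, x), Q (0, x))) (hA_infty : A ∞ = homogPoint (1, L 0))
    (hB : ∀ x : X, B x = homogPoint (P (1, x), Q (1, x))) (hB_infty : B ∞ = homogPoint (1, L 1)) :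
    FreelyHomotopic A B := by
  refine .of_continuous (H := fun p => p.2.elim (homogPoint (1, L p.1))
    fun x => homogPoint (P (p.1, x), Q (p.1, x)))
    (continuous_prod_onePoint ?_ (continuous_homogPoint_one.comp hL) fun t => ?_)
    (OnePoint.forall.2 ⟨hA_infty.symm, fun x => (hA x).symm⟩)
    (OnePoint.forall.2 ⟨hB_infty.symm, fun x => (hB x).symm⟩)
  · exact continuous_iff_continuousAt.2 fun p =>
      ContinuousAt.comp (f := fun p => (P p, Q p)) (continuousAt_homogPoint (hPQ p)) (by fun_prop)
  · rw [coclosedCompact_eq_cocompact]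
    have hlim := (hQN t).div (hPN t) one_ne_zero
    rw [div_one] at hlim
    refine ((continuous_homogPoint_one.tendsto (L t)).comp hlim).congr' ?_
    filter_upwards [(hPN t).eventually_ne one_ne_zero] with p hp
    obtain ⟨hPp, hNp⟩ := div_ne_zero_iff.1 hp
    rw [Function.comp_apply, Pi.div_apply, div_div_div_cancel_right₀ hNp]
    exact homogPoint_one_div hPp

theorem exists_tendsto_div_of_eq_homogPoint [ProperSpace K] [NoncompactSpace X] {F G : X → K}
    {R : OnePoint X → OnePoint K} (hR : ContinuousAt R ∞)
    (hRFG : ∀ x : X, R x = homogPoint (F x, G x)) (hF : ∀ᶠ x in cocompact X, F x ≠ 0)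
    (hGF : G =O[cocompact X] F) :
    ∃ ℓ, Tendsto (fun x => G x / F x) (cocompact X) (𝓝 ℓ) ∧ R ∞ = homogPoint (1, ℓ) := by
  have hRlim : Tendsto (fun x : X => homogPoint (1, G x / F x)) (cocompact X) (𝓝 (R ∞)) := by
    rw [OnePoint.continuousAt_infty', coclosedCompact_eq_cocompact] at hR
    refine hR.congr' ?_
    filter_upwards [hF] with x hx
    exact (hRFG x).trans (homogPoint_one_div hx).symm
  obtain ⟨M, hM⟩ := hGF.bound
  have hball : ∀ᶠ x in cocompact X, G x / F x ∈ Metric.closedBall 0 M := by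
    filter_upwards [hM, hF] with x hx hFx
    rwa [mem_closedBall_zero_iff, norm_div, div_le_iff₀ (norm_pos_iff.2 hFx)]
  have hcluster {a : K} (ha : MapClusterPt a (cocompact X) fun x => G x / F x) :
      homogPoint (1, a) = R ∞ := by
    have := ha.continuousAt_comp continuous_homogPoint_one.continuousAt
    exact t2_iff_nhds.1 inferInstance (ClusterPt.mono this hRlim)
  have hcompact := isCompact_closedBall (0 : K) M
  obtain ⟨ℓ, -, hℓ⟩ := hcompact.exists_mapClusterPt (tendsto_principal.2 hball)
  exact ⟨ℓ, hcompact.tendsto_nhds_of_unique_mapClusterPt hball fun a _ ha =>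
    homogPoint_one_injective ((hcluster ha).trans (hcluster hℓ).symm), (hcluster hℓ).symm⟩

end HomogeneousCoordinatesHomotopy

section RadialExtension

theorem tendsto_norm_pow_cocompact_atTop {E : Type*} [NormedAddCommGroup E] [ProperSpace E] {d : ℕ}
    (hd : d ≠ 0) : Tendsto (fun x : E => ‖x‖ ^ d) (cocompact E) atTop :=
  (tendsto_pow_atTop hd).comp (tendsto_norm_cocompact_atTop (E := E))

variable {E V Y : Type*} [NormedAddCommGroup E] [NormedSpace ℝ E] [NormedAddCommGroup V]
  [NormedSpace ℝ V] [TopologicalSpace Y] [CompactSpace Y] {d k : ℕ}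

/-- The extension of `F`, restricted to the unit sphere, to a positively homogeneous map of
degree `d`. For `d ≠ 0` only the values of `F` on the unit sphere matter. -/
noncomputable def radialExtend (d : ℕ) (F : E → V) (x : E) : V :=
  ‖x‖ ^ d • F (‖x‖⁻¹ • x)

theorem radialExtend_zero_right (hd : d ≠ 0) (F : E → V) : radialExtend d F 0 = 0 := by
  simp [radialExtend, hd]

theorem radialExtend_congr (hd : d ≠ 0) {F G : E → V} (h : ∀ w, ‖w‖ = 1 → F w = G w) :
    radialExtend d F = radialExtend d G := by
  ext x
  rcases eq_or_ne x 0 with rfl | hx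
  · simp only [radialExtend_zero_right hd]
  · rw [radialExtend, radialExtend, h (‖x‖⁻¹ • x) (norm_smul_inv_norm (𝕜 := ℝ) hx)]

theorem radialExtend_eq_self {F : E → V} (h : ∀ (r : ℝ) (x : E), F (r • x) = r ^ d • F x) :
    radialExtend d F = F := by
  ext x
  rcases eq_or_ne x 0 with rfl | hx
  · simp [radialExtend, ← h]
  · rw [radialExtend, ← h, smul_inv_smul₀ (norm_ne_zero_iff.2 hx)]

theorem sameRay_radialExtend (F : E → V) (x : E) :
    SameRay ℝ (radialExtend d F x) (radialExtend k F x) :=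
  ((SameRay.refl _).nonneg_smul_left (by positivity)).nonneg_smul_right (by positivity)

theorem exists_norm_radialExtend_uncurry_le [ProperSpace E] {F : Y × E → V} (hF : Continuous F)
    (d : ℕ) : ∃ M, ∀ y x, ‖radialExtend d (fun w => F (y, w)) x‖ ≤ M * ‖x‖ ^ d := by
  obtain ⟨M, hM⟩ := ((isCompact_univ (X := Y)).prod
    (isCompact_closedBall (0 : E) 1)).exists_bound_of_continuousOn hF.continuousOn
  refine ⟨M, fun y x => ?_⟩
  rw [radialExtend, norm_smul, norm_pow, norm_norm, mul_comm]
  gcongr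
  refine hM (y, ‖x‖⁻¹ • x) ⟨trivial, ?_⟩
  rw [mem_closedBall_zero_iff, norm_smul, norm_inv, norm_norm]
  exact inv_mul_le_one

theorem continuous_radialExtend_uncurry [ProperSpace E] (hd : d ≠ 0) {F : Y × E → V}
    (hF : Continuous F) :
    Continuous fun p : Y × E => radialExtend d (fun w => F (p.1, w)) p.2 := by
  rw [continuous_iff_continuousAt]
  rintro ⟨y, x⟩
  rcases eq_or_ne x 0 with rfl | hx
  · obtain ⟨M, hM⟩ := exists_norm_radialExtend_uncurry_le hF d
    rw [ContinuousAt, radialExtend_zero_right hd]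
    refine squeeze_zero_norm (fun p => hM p.1 p.2) ?_
    have hcont : Continuous fun p : Y × E => M * ‖p.2‖ ^ d := by fun_prop
    simpa [hd] using hcont.tendsto (y, 0)
  · have hdir : ContinuousAt (fun p : Y × E => (p.1, ‖p.2‖⁻¹ • p.2)) (y, x) :=
      continuousAt_fst.prodMk
        ((continuousAt_snd.norm.inv₀ (norm_ne_zero_iff.2 hx)).smul continuousAt_snd)
    exact (continuousAt_snd.norm.pow d).smul (hF.continuousAt.comp hdir)

theorem continuous_radialExtend [ProperSpace E] (hd : d ≠ 0) {F : E → V} (hF : Continuous F) :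
    Continuous (radialExtend d F) :=
  (continuous_radialExtend_uncurry (Y := Unit) (F := fun p => F p.2) hd (by fun_prop)).comp
    (Continuous.prodMk_right ())

theorem exists_pos_mul_pow_le_norm_radialExtend_uncurry [ProperSpace E] {F : Y × E → V} (hd : d ≠ 0)
    (hF : Continuous F) (hne : ∀ y w, ‖w‖ = 1 → F (y, w) ≠ 0) :
    ∃ m > 0, ∀ y x, m * ‖x‖ ^ d ≤ ‖radialExtend d (fun w => F (y, w)) x‖ := by
  obtain ⟨m, hm, hle⟩ := (isCompact_univ.prod (isCompact_sphere (0 : E) 1)).exists_forall_le'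
    hF.norm.continuousOn (a := 0)
    fun p hp => norm_pos_iff.2 (hne p.1 p.2 (mem_sphere_zero_iff_norm.1 hp.2))
  refine ⟨m, hm, fun y x => ?_⟩
  rcases eq_or_ne x 0 with rfl | hx
  · simp [hd]
  · rw [radialExtend, norm_smul, norm_pow, norm_norm, mul_comm]
    gcongr
    exact hle (y, ‖x‖⁻¹ • x) ⟨trivial, mem_sphere_zero_iff_norm.2 (norm_smul_inv_norm (𝕜 := ℝ) hx)⟩

theorem exists_pos_mul_pow_le_norm_radialExtend [ProperSpace E] {F : E → V} (hd : d ≠ 0)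
    (hF : Continuous F) (hne : ∀ w, ‖w‖ = 1 → F w ≠ 0) :
    ∃ m > 0, ∀ x, m * ‖x‖ ^ d ≤ ‖radialExtend d F x‖ := by
  obtain ⟨m, hm, hle⟩ := exists_pos_mul_pow_le_norm_radialExtend_uncurry (Y := Unit)
    (F := fun p => F p.2) hd (by fun_prop) fun _ => hne
  exact ⟨m, hm, hle ()⟩

theorem radialExtend_isBigO_norm_pow [ProperSpace E] {F : E → V} (hF : Continuous F) (d : ℕ)
    (l : Filter E) : radialExtend d F =O[l] fun x => ‖x‖ ^ d := by
  obtain ⟨M, hM⟩ :=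
    exists_norm_radialExtend_uncurry_le (Y := Unit) (F := fun p => F p.2) (by fun_prop) d
  refine .of_bound M (.of_forall fun x => ?_)
  rw [norm_pow, norm_norm]
  exact hM () x

theorem norm_pow_isBigO_radialExtend [ProperSpace E] {F : E → V} (hd : d ≠ 0) (hF : Continuous F)
    (hne : ∀ w, ‖w‖ = 1 → F w ≠ 0) (l : Filter E) :
    (fun x => ‖x‖ ^ d) =O[l] radialExtend d F := by
  obtain ⟨m, hm, hle⟩ := exists_pos_mul_pow_le_norm_radialExtend hd hF hne
  refine .of_bound m⁻¹ (.of_forall fun x => ?_)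
  rw [norm_pow, norm_norm, le_inv_mul_iff₀ hm]
  exact hle x

theorem tendsto_norm_radialExtend_atTop [ProperSpace E] {F : E → V} (hd : d ≠ 0)
    (hF : Continuous F) (hne : ∀ w, ‖w‖ = 1 → F w ≠ 0) :
    Tendsto (‖radialExtend d F ·‖) (cocompact E) atTop := by
  obtain ⟨m, hm, hle⟩ := exists_pos_mul_pow_le_norm_radialExtend hd hF hne
  exact tendsto_atTop_mono hle ((tendsto_norm_pow_cocompact_atTop hd).const_mul_atTop hm)

variable [ProperSpace E] [ProperSpace V]

theorem freelyHomotopic_map_radialExtend {A B : E → V} {F : I × E → V} (hd : d ≠ 0)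
    (hF : Continuous F) (h₀ : ∀ w, F (0, w) = A w) (h₁ : ∀ w, F (1, w) = B w)
    (hne : ∀ t w, ‖w‖ = 1 → F (t, w) ≠ 0) :
    FreelyHomotopic (OnePoint.map (radialExtend d A)) (OnePoint.map (radialExtend d B)) := by
  obtain ⟨m, hm, hle⟩ := exists_pos_mul_pow_le_norm_radialExtend_uncurry hd hF hne
  exact freelyHomotopic_map_of_le_norm (continuous_radialExtend_uncurry hd hF)
    (fun x => by simp only [h₀]) (fun x => by simp only [h₁])
    ((tendsto_norm_pow_cocompact_atTop hd).const_mul_atTop hm) (.of_forall fun x t => hle t x)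

theorem freelyHomotopic_map_radialExtend_of_ne_zero {F : E → V} (hd : d ≠ 0) (hk : k ≠ 0)
    (hF : Continuous F) (hne : ∀ w, ‖w‖ = 1 → F w ≠ 0) :
    FreelyHomotopic (OnePoint.map (radialExtend d F)) (OnePoint.map (radialExtend k F)) :=
  freelyHomotopic_map_of_sameRay (continuous_radialExtend hd hF) (continuous_radialExtend hk hF)
    (sameRay_radialExtend F) (tendsto_norm_radialExtend_atTop hd hF hne)
    (tendsto_norm_radialExtend_atTop hk hF hne)

theorem freelyHomotopic_map_radialExtend_of_homogeneous {F : E → V} (hd : d ≠ 0) (hk : k ≠ 0)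
    (hF : Continuous F) (hne : ∀ w, ‖w‖ = 1 → F w ≠ 0) (h : ∀ (r : ℝ) x, F (r • x) = r ^ k • F x) :
    FreelyHomotopic (OnePoint.map (radialExtend d F)) (OnePoint.map F) := by
  simpa only [radialExtend_eq_self h] using freelyHomotopic_map_radialExtend_of_ne_zero hd hk hF hne

end RadialExtension

section Perturbation

theorem tendsto_coe_fst_unitInterval {X : Type*} (l : Filter X) (t : I) :
    Tendsto (fun p : I × X => (p.1 : ℂ)) (𝓝 t ×ˢ l) (𝓝 t) :=
  ((by fun_prop : Continuous fun s : I => (s : ℂ)).tendsto t).comp tendsto_fst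

variable {E : Type*} [NormedAddCommGroup E] [NormedSpace ℝ E] [FiniteDimensional ℝ E]

theorem exists_ne_zero_forall_perturbation_ne_zero {V W : Type*} [NormedAddCommGroup V]
    [NormedSpace ℝ V] [FiniteDimensional ℝ V] [NormedAddCommGroup W] [NormedSpace ℝ W]
    [FiniteDimensional ℝ W] [Nontrivial W] {F : E → V} {G : E → W} (hF : ContDiff ℝ 1 F)
    (hG : ContDiff ℝ 1 G) (hFG : ∀ x, (F x, G x) ≠ 0)
    (hdim : Module.finrank ℝ E + 1 < Module.finrank ℝ V + Module.finrank ℝ W) :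
    ∃ (e : V) (c : W), c ≠ 0 ∧ ∀ x (t : ℝ), (F x + t • e, (1 - t) • G x + t • c) ≠ 0 := by
  -- For `t ≠ 0`, the pair vanishes at `x` exactly when `(e, c) = Φ (x, t⁻¹)`.
  let Φ : E × ℝ → V × W := fun p => (-p.2 • F p.1, (1 - p.2) • G p.1)
  have hΦ : ContDiff ℝ 1 Φ := by fun_prop
  have hdense : Dense (Set.range Φ)ᶜ :=
    hΦ.dense_compl_range_of_finrank_lt_finrank (by simpa using hdim)
  obtain ⟨w, hw⟩ := exists_ne (0 : W)
  obtain ⟨⟨e, c⟩, hec, hc⟩ := hdense.exists_mem_open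
    (isOpen_compl_singleton.preimage (continuous_snd (X := V))) ⟨(0, w), hw⟩
  refine ⟨e, c, hc, fun x t h => ?_⟩
  obtain ⟨h₁, h₂⟩ := Prod.mk.inj h
  rcases eq_or_ne t 0 with rfl | ht
  · exact hFG x (by simpa using h)
  · have he : e = t⁻¹ • -F x := (eq_inv_smul_iff₀ ht).2 (eq_neg_of_add_eq_zero_right h₁)
    have hc' : c = t⁻¹ • -((1 - t) • G x) :=
      (eq_inv_smul_iff₀ ht).2 (eq_neg_of_add_eq_zero_right h₂)
    refine hec ⟨(x, t⁻¹), Prod.ext ?_ ?_⟩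
    · simp only [Φ, he, smul_neg, neg_smul]
    · simp only [Φ, hc', ← neg_smul, smul_smul]
      congr 1
      field

theorem exists_freelyHomotopic_map_add_div [Nontrivial E] (hE : Module.finrank ℝ E ≤ 2)
    {F G : E → ℂ} (hF : ContDiff ℝ 1 F) (hG : ContDiff ℝ 1 G) (hFG : ∀ x, (F x, G x) ≠ 0)
    (hFlim : Tendsto (‖F ·‖) (cocompact E) atTop) (hGF : G =O[cocompact E] F)
    {R : OnePoint E → OnePoint ℂ} (hR : Continuous R)
    (hRFG : ∀ x : E, R x = homogPoint (F x, G x)) :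
    ∃ e c : ℂ, c ≠ 0 ∧ FreelyHomotopic R (OnePoint.map fun x => (F x + e) / c) := by
  obtain ⟨e, c, hc, hne⟩ := exists_ne_zero_forall_perturbation_ne_zero hF hG hFG
    (by rw [Complex.finrank_real_complex]; omega)
  have hF_ne : ∀ᶠ x in cocompact E, F x ≠ 0 :=
    (hFlim.eventually_gt_atTop 0).mono fun x => norm_pos_iff.1
  obtain ⟨ℓ, hℓ, hR_infty⟩ := exists_tendsto_div_of_eq_homogPoint hR.continuousAt hRFG hF_ne hGF
  have hFinv : Tendsto (fun x => (F x)⁻¹) (cocompact E) (𝓝 0) :=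
    tendsto_inv₀_cobounded.comp (tendsto_norm_atTop_iff_cobounded.1 hFlim)
  have hfst := tendsto_coe_fst_unitInterval (cocompact E)
  have hP (t : I) : Tendsto (fun p : I × E => (F p.2 + p.1 * e) / F p.2) (𝓝 t ×ˢ cocompact E)
      (𝓝 1) := by
    have hlim := (((hfst t).mul_const e).mul (hFinv.comp tendsto_snd)).const_add 1
    rw [mul_zero, add_zero] at hlim
    refine hlim.congr' ?_
    filter_upwards [hF_ne.prod_inr (𝓝 t)] with p hp
    rw [add_div, div_self hp, Function.comp_apply, div_eq_mul_inv]
  have hQ (t : I) : Tendsto (fun p : I × E => ((1 - p.1) * G p.2 + p.1 * c) / F p.2)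
      (𝓝 t ×ˢ cocompact E) (𝓝 ((1 - t) * ℓ)) := by
    have hlim := (((hfst t).const_sub 1).mul (hℓ.comp tendsto_snd)).add
      (((hfst t).mul_const c).mul (hFinv.comp tendsto_snd))
    rw [mul_zero, add_zero] at hlim
    refine hlim.congr fun p => ?_
    simp only [Function.comp_apply]
    ring
  exact ⟨e, c, hc, freelyHomotopic_of_homogPoint (P := fun p => F p.2 + p.1 * e)
    (Q := fun p => (1 - p.1) * G p.2 + p.1 * c) (by have := hF.continuous; fun_prop)
    (by have := hG.continuous; fun_prop) (by fun_prop) (fun p => by simpa using hne p.2 p.1) hP hQ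
    (fun x => by simp [hRFG]) (by simpa using hR_infty)
    (fun x => by simp [homogPoint_of_ne_zero _ hc]) (by simp [homogPoint_zero_right])⟩

end Perturbation

section HomotopicOnCircle

variable {A B C D : ℂ → ℂ}

/-- `A` and `B` are homotopic through maps `ℂ → ℂ` without zeros on the unit circle, that is,
their restrictions to the circle have the same winding number about `0`. -/
def HomotopicOnCircle (A B : ℂ → ℂ) : Prop :=
  ∃ F : I × ℂ → ℂ, Continuous F ∧ (∀ w, F (0, w) = A w) ∧ (∀ w, F (1, w) = B w) ∧
    ∀ t w, ‖w‖ = 1 → F (t, w) ≠ 0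

theorem HomotopicOnCircle.refl (hA : Continuous A) (hne : ∀ w, ‖w‖ = 1 → A w ≠ 0) :
    HomotopicOnCircle A A :=
  ⟨fun p => A p.2, by fun_prop, fun _ => rfl, fun _ => rfl, fun _ => hne⟩

theorem HomotopicOnCircle.mul (hAB : HomotopicOnCircle A B) (hCD : HomotopicOnCircle C D) :
    HomotopicOnCircle (fun w => A w * C w) (fun w => B w * D w) := by
  obtain ⟨F, hF, hF₀, hF₁, hF_ne⟩ := hAB
  obtain ⟨G, hG, hG₀, hG₁, hG_ne⟩ := hCD
  exact ⟨fun p => F p * G p, hF.mul hG, fun w => congrArg₂ _ (hF₀ w) (hG₀ w),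
    fun w => congrArg₂ _ (hF₁ w) (hG₁ w),
    fun t w hw => mul_ne_zero (hF_ne t w hw) (hG_ne t w hw)⟩

theorem homotopicOnCircle_const {a b : ℂ} (ha : a ≠ 0) (hb : b ≠ 0) :
    HomotopicOnCircle (fun _ => a) (fun _ => b) := by
  have hconn : IsPathConnected ({0}ᶜ : Set ℂ) :=
    isPathConnected_compl_singleton_of_one_lt_rank (by simp) 0
  obtain ⟨γ, hγ⟩ := hconn.joinedIn a ha b hb
  exact ⟨fun p => γ p.1, by fun_prop, fun _ => γ.source, fun _ => γ.target, fun t _ _ => hγ t⟩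

theorem homotopicOnCircle_sub_of_norm_lt_one {a : ℂ} (ha : ‖a‖ < 1) :
    HomotopicOnCircle (fun w => w - a) id := by
  refine ⟨fun p => p.2 - (σ p.1 : ℝ) • a, by fun_prop, by simp, by simp, fun t w hw h => ?_⟩
  have hle : ‖(σ t : ℝ) • a‖ ≤ ‖a‖ := by
    rw [norm_smul, Real.norm_of_nonneg (σ t).2.1]
    exact mul_le_of_le_one_left (norm_nonneg a) (σ t).2.2
  rw [← sub_eq_zero.1 h, hw] at hle
  exact ha.not_ge hle

theorem homotopicOnCircle_sub_of_one_lt_norm {a : ℂ} (ha : 1 < ‖a‖) :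
    HomotopicOnCircle (fun w => w - a) fun _ => 1 := by
  have hpush : HomotopicOnCircle (fun w => w - a) (fun _ => -a) := by
    refine ⟨fun p => (σ p.1 : ℝ) • p.2 - a, by fun_prop, by simp, by simp, fun t w hw h => ?_⟩
    have hle : ‖(σ t : ℝ) • w‖ ≤ ‖w‖ := by
      rw [norm_smul, Real.norm_of_nonneg (σ t).2.1]
      exact mul_le_of_le_one_left (norm_nonneg w) (σ t).2.2
    rw [sub_eq_zero.1 h, hw] at hle
    exact ha.not_ge hle
  have ha₀ : -a ≠ 0 := neg_ne_zero.2 (norm_pos_iff.1 (one_pos.trans ha))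
  have hscale := hpush.mul (homotopicOnCircle_const one_ne_zero (inv_ne_zero ha₀))
  simpa only [mul_one, mul_inv_cancel₀ ha₀] using hscale

theorem homotopicOnCircle_prod_sub {S : Multiset ℂ} (hS : ∀ a ∈ S, ‖a‖ ≠ 1) :
    HomotopicOnCircle (fun w => (S.map fun a => w - a).prod)
      (· ^ (S.filter fun a => ‖a‖ < 1).card) := by
  induction S using Multiset.induction_on with
  | empty => simpa using HomotopicOnCircle.refl continuous_const (by simp)
  | cons a S ih =>
    have hprod := ih fun b hb => hS b (Multiset.mem_cons_of_mem hb)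
    rcases (hS a (Multiset.mem_cons_self a S)).lt_or_gt with ha | ha
    · simpa [ha, pow_succ'] using (homotopicOnCircle_sub_of_norm_lt_one ha).mul hprod
    · simpa [ha.not_gt] using (homotopicOnCircle_sub_of_one_lt_norm ha).mul hprod

theorem homotopicOnCircle_eval {P : ℂ[X]} (hP : ∀ w, ‖w‖ = 1 → P.eval w ≠ 0) :
    HomotopicOnCircle P.eval (· ^ (P.roots.filter fun a => ‖a‖ < 1).card) := by
  have hP₀ : P ≠ 0 := by
    rintro rfl
    exact hP 1 norm_one eval_zero
  have hroots : ∀ a ∈ P.roots, ‖a‖ ≠ 1 := fun a ha hnorm => hP a hnorm (isRoot_of_mem_roots ha)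
  have hprod := (homotopicOnCircle_const (leadingCoeff_ne_zero.2 hP₀) one_ne_zero).mul
    (homotopicOnCircle_prod_sub hroots)
  simpa only [← (IsAlgClosed.splits P).eval_eq_prod_roots, one_mul] using hprod

end HomotopicOnCircle

section StandardMaps

theorem freelyHomotopic_map_ofReal_const {X : Type*} [TopologicalSpace X] [R1Space X] {r : X → ℝ}
    (hr : Continuous r) (hr₀ : ∀ x, 0 ≤ r x) (hlim : Tendsto r (cocompact X) atTop) :
    FreelyHomotopic (OnePoint.map fun x => (r x : ℂ)) fun _ => ((1 : ℂ) : OnePoint ℂ) := by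
  -- The homotopy is `[r + t : 1 + t r]`; its value at `∞` is `[1 : t]`.
  have hr_ne : ∀ᶠ x in cocompact X, (r x : ℂ) ≠ 0 :=
    (hlim.eventually_gt_atTop 0).mono fun x hx => ofReal_ne_zero.2 hx.ne'
  have hrinv : Tendsto (fun x => (r x : ℂ)⁻¹) (cocompact X) (𝓝 0) := by
    simpa [Function.comp_def] using
      (continuous_ofReal.tendsto 0).comp (tendsto_inv_atTop_zero.comp hlim)
  have hfst := tendsto_coe_fst_unitInterval (cocompact X)
  have hQ_ne (p : I × X) : (1 + p.1 * r p.2 : ℂ) ≠ 0 := by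
    have := mul_nonneg p.1.2.1 (hr₀ p.2)
    exact_mod_cast (by positivity : 1 + p.1 * r p.2 ≠ 0)
  have hP (t : I) : Tendsto (fun p : I × X => (r p.2 + p.1) / (r p.2 : ℂ)) (𝓝 t ×ˢ cocompact X)
      (𝓝 1) := by
    have hsum := ((hfst t).mul (hrinv.comp tendsto_snd)).const_add 1
    rw [mul_zero, add_zero] at hsum
    refine hsum.congr' ?_
    filter_upwards [hr_ne.prod_inr (𝓝 t)] with p hp
    rw [add_div, div_self hp, Function.comp_apply, div_eq_mul_inv]
  have hQ (t : I) : Tendsto (fun p : I × X => (1 + p.1 * r p.2) / (r p.2 : ℂ))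
      (𝓝 t ×ˢ cocompact X) (𝓝 t) := by
    have hsum := (hrinv.comp tendsto_snd).add (hfst t)
    rw [zero_add] at hsum
    refine hsum.congr' ?_
    filter_upwards [hr_ne.prod_inr (𝓝 t)] with p hp
    rw [add_div, mul_div_cancel_right₀ _ hp, Function.comp_apply, one_div]
  refine freelyHomotopic_of_homogPoint (P := fun p => (r p.2 + p.1 : ℂ))
    (Q := fun p => 1 + p.1 * r p.2) (by fun_prop) (by fun_prop) (by fun_prop)
    (fun p h => hQ_ne p (Prod.mk.inj h).2) hP hQ (fun x => ?_) (by simp [homogPoint_zero_right])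
    (fun x => ?_) (by simp [homogPoint_of_ne_zero])
  · simp [homogPoint_of_ne_zero]
  · have hne : (1 + r x : ℂ) ≠ 0 := by simpa using hQ_ne (1, x)
    simp [homogPoint_of_ne_zero _ hne, add_comm _ (1 : ℂ), hne]

theorem stdSphereMap_zero_s1 : stdSphereMap 0 = fun _ => ((1 : ℂ) : OnePoint ℂ) :=
  funext (OnePoint.forall.2 ⟨rfl, fun _ => rfl⟩)

theorem stdSphereMap_natCast {k : ℕ} (hk : k ≠ 0) :
    stdSphereMap k = OnePoint.map fun z : ℂ => z ^ k := by
  have hpos : (0 : ℤ) < k := by positivity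
  exact funext (OnePoint.forall.2
    ⟨if_neg hpos.ne', fun _ => (if_neg hpos.ne').trans (if_pos hpos)⟩)

theorem stdSphereMap_neg_natCast {k : ℕ} (hk : k ≠ 0) :
    stdSphereMap (-k) = OnePoint.map fun z : ℂ => (starRingEnd ℂ) z ^ k := by
  have hneg : -(k : ℤ) < 0 := by simpa [Nat.pos_iff_ne_zero]
  refine funext (OnePoint.forall.2
    ⟨if_neg hneg.ne, fun _ => (if_neg hneg.ne).trans ((if_neg hneg.not_gt).trans ?_)⟩)
  rw [neg_neg, Int.toNat_natCast, OnePoint.map_some]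

theorem freelyHomotopic_map_radialExtend_stdSphereMap {d : ℕ} (hd : d ≠ 0) (a b : ℕ) :
    FreelyHomotopic (OnePoint.map (radialExtend d fun w => (starRingEnd ℂ) w ^ a * w ^ b))
      (stdSphereMap (b - a)) := by
  have hunit (w : ℂ) (hw : ‖w‖ = 1) : (starRingEnd ℂ) w * w = 1 := by
    rw [conj_mul', hw, ofReal_one, one_pow]
  rcases lt_trichotomy a b with hab | rfl | hab
  · obtain ⟨k, rfl⟩ := Nat.exists_eq_add_of_le hab.le
    have hk : k ≠ 0 := by omega
    have hcircle : ∀ w : ℂ, ‖w‖ = 1 → (starRingEnd ℂ) w ^ a * w ^ (a + k) = w ^ k := fun w hw => by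
      rw [pow_add, ← mul_assoc, ← mul_pow, hunit w hw, one_pow, one_mul]
    rw [radialExtend_congr hd hcircle, Nat.cast_add, add_sub_cancel_left, stdSphereMap_natCast hk]
    exact freelyHomotopic_map_radialExtend_of_homogeneous hd hk (by fun_prop)
      (fun w hw => pow_ne_zero k (ne_zero_of_norm_ne_zero (by simp [hw])))
      fun r w => _root_.smul_pow r w k
  · have hcircle : ∀ w : ℂ, ‖w‖ = 1 → (starRingEnd ℂ) w ^ a * w ^ a = 1 := fun w hw => by
      rw [← mul_pow, hunit w hw, one_pow]
    have hnorm : (radialExtend d fun _ : ℂ => (1 : ℂ)) = fun z => ((‖z‖ ^ d : ℝ) : ℂ) :=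
      funext fun z => real_smul.trans (mul_one _)
    rw [radialExtend_congr hd hcircle, hnorm, sub_self, stdSphereMap_zero_s1]
    exact freelyHomotopic_map_ofReal_const (by fun_prop) (fun z => by positivity)
      (tendsto_norm_pow_cocompact_atTop hd)
  · obtain ⟨k, rfl⟩ := Nat.exists_eq_add_of_le hab.le
    have hk : k ≠ 0 := by omega
    have hcircle : ∀ w : ℂ, ‖w‖ = 1 →
        (starRingEnd ℂ) w ^ (b + k) * w ^ b = (starRingEnd ℂ) w ^ k := fun w hw => by
      rw [pow_add, mul_right_comm, ← mul_pow, hunit w hw, one_pow, one_mul]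
    rw [radialExtend_congr hd hcircle, Nat.cast_add, sub_add_cancel_left,
      stdSphereMap_neg_natCast hk]
    exact freelyHomotopic_map_radialExtend_of_homogeneous hd hk (by fun_prop)
      (fun w hw => pow_ne_zero k (ne_zero_of_norm_ne_zero (by simp [hw])))
      fun r w => by simp [mul_pow]

end StandardMaps

section Degree

theorem ne_zero_and_ne_zero_of_homogeneous {E V : Type*} [NormedAddCommGroup E]
    [NormedSpace ℝ E] [ProperSpace E] [NormedAddCommGroup V] [NormedSpace ℝ V] {T : E → V} {d : ℕ}
    (hT : ∀ (r : ℝ) x, T (r • x) = r ^ d • T x) (hlim : Tendsto (‖T ·‖) (cocompact E) atTop)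
    {x : E} (hx : x ≠ 0) : d ≠ 0 ∧ T x ≠ 0 := by
  have hray : Tendsto (fun r : ℝ => r • x) atTop (cocompact E) := by
    rw [← Metric.cobounded_eq_cocompact, ← tendsto_norm_atTop_iff_cobounded]
    simp only [norm_smul, Real.norm_eq_abs]
    exact tendsto_abs_atTop_atTop.atTop_mul_const (norm_pos_iff.2 hx)
  have hpow : Tendsto (fun r : ℝ => ‖T x‖ * r ^ d) atTop atTop := by
    refine (hlim.comp hray).congr' ?_
    filter_upwards [eventually_ge_atTop 0] with r hr
    rw [Function.comp_apply, hT, norm_smul, Real.norm_of_nonneg (by positivity), mul_comm]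
  exact (tendsto_const_mul_pow_atTop_iff.1 hpow).imp_right norm_pos_iff.1

theorem freelyHomotopic_map_radialExtend_mul_eval {d : ℕ} (hd : d ≠ 0) {c : ℂ} (hc : c ≠ 0)
    {P : ℂ[X]} (hP : ∀ w, ‖w‖ = 1 → P.eval w ≠ 0) :
    FreelyHomotopic
      (OnePoint.map (radialExtend d fun w => c * ((starRingEnd ℂ) w ^ d * P.eval w)))
      (stdSphereMap ((P.roots.filter fun z => ‖z‖ < 1).card - d)) := by
  have hconj : HomotopicOnCircle (fun w => (starRingEnd ℂ) w ^ d)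
      (fun w => (starRingEnd ℂ) w ^ d) :=
    .refl (by fun_prop) fun w hw => pow_ne_zero d (ne_zero_of_norm_ne_zero (by simp [hw]))
  obtain ⟨F, hF, hF₀, hF₁, hne⟩ :=
    (homotopicOnCircle_const hc one_ne_zero).mul (hconj.mul (homotopicOnCircle_eval hP))
  simp only [one_mul] at hF₁
  exact (freelyHomotopic_map_radialExtend hd hF hF₀ hF₁ hne).trans
    (freelyHomotopic_map_radialExtend_stdSphereMap hd d _)

variable {f g : ℂ → ℂ} {d : ℕ} {R : OnePoint ℂ → OnePoint ℂ}

theorem hasDegree_of_isEquivalent_radialExtend (hf : ContDiff ℝ 1 f) (hg : ContDiff ℝ 1 g)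
    (hfg : ∀ z, (f z, g z) ≠ 0) (hd : d ≠ 0) {P : ℂ[X]} (hP : ∀ w, ‖w‖ = 1 → P.eval w ≠ 0)
    (hfP : f ~[cocompact ℂ] radialExtend d fun w => (starRingEnd ℂ) w ^ d * P.eval w)
    (hgf : g =O[cocompact ℂ] f) (hR : Continuous R)
    (hRfg : ∀ z : ℂ, R z = homogPoint (f z, g z)) :
    HasDegree R (((P.roots.filter fun z => ‖z‖ < 1).card : ℤ) - d) := by
  set A : ℂ → ℂ := fun w => (starRingEnd ℂ) w ^ d * P.eval w
  have hA : Continuous A := by fun_prop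
  have hA_ne : ∀ w, ‖w‖ = 1 → A w ≠ 0 := fun w hw =>
    mul_ne_zero (pow_ne_zero d (ne_zero_of_norm_ne_zero (by simp [hw]))) (hP w hw)
  have hAlim := tendsto_norm_radialExtend_atTop hd hA hA_ne
  obtain ⟨e, c, hc, hRe⟩ := exists_freelyHomotopic_map_add_div finrank_real_complex.le hf hg hfg
    (hfP.isBigO_symm.trans_tendsto_norm_atTop hAlim) hgf hR hRfg
  have hscale : radialExtend d (fun w => c⁻¹ * A w) = fun z => radialExtend d A z / c :=
    funext fun z => by rw [radialExtend, radialExtend, ← mul_smul_comm, inv_mul_eq_div]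
  have hequiv : (fun z => (f z + e) / c) ~[cocompact ℂ] radialExtend d fun w => c⁻¹ * A w := by
    rw [hscale]
    exact (hfP.add_const_of_norm_tendsto_atTop hAlim).div .refl
  have hleading := freelyHomotopic_map_of_isEquivalent
    (by have := hf.continuous; fun_prop) (continuous_radialExtend hd (by fun_prop)) hequiv
    (tendsto_norm_radialExtend_atTop hd (by fun_prop) fun w hw =>
      mul_ne_zero (inv_ne_zero hc) (hA_ne w hw))
  exact ((hRe.trans hleading).trans
    (freelyHomotopic_map_radialExtend_mul_eval hd (inv_ne_zero hc) hP)).hasDegree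

theorem degree_eq_roots_in_disk_sub_d_general {T : ℂ → ℂ} (hf : ContDiff ℝ 1 f)
    (hg : ContDiff ℝ 1 g) (hfg : ∀ z, (f z, g z) ≠ 0)
    (hT : ∀ (r : ℝ) z, T (r • z) = r ^ d • T z) (hTinf : Tendsto (‖T ·‖) (cocompact ℂ) atTop)
    (hfT : (f - T) =o[cocompact ℂ] fun z => ‖z‖ ^ d) (hgd : g =O[cocompact ℂ] fun z => ‖z‖ ^ d)
    (hR : Continuous R) (hRfg : ∀ z : ℂ, R z = homogPoint (f z, g z)) {Ttilde : ℂ[X]}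
    (hTtilde : ∀ w, ‖w‖ = 1 → Ttilde.eval w = w ^ d * T w) :
    HasDegree R (((Ttilde.roots.filter fun z => ‖z‖ < 1).card : ℤ) - d) := by
  have hne {w : ℂ} (hw : ‖w‖ = 1) : d ≠ 0 ∧ T w ≠ 0 :=
    ne_zero_and_ne_zero_of_homogeneous hT hTinf (ne_zero_of_norm_ne_zero (by simp [hw]))
  have hd : d ≠ 0 := (hne norm_one).1
  have hTtilde_ne : ∀ w, ‖w‖ = 1 → Ttilde.eval w ≠ 0 := fun w hw => by
    rw [hTtilde w hw]
    exact mul_ne_zero (pow_ne_zero d (ne_zero_of_norm_ne_zero (by simp [hw]))) (hne hw).2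
  have hT_ext : T = radialExtend d fun w => (starRingEnd ℂ) w ^ d * Ttilde.eval w := by
    rw [← radialExtend_eq_self hT]
    refine radialExtend_congr hd fun w hw => ?_
    rw [hTtilde w hw, ← mul_assoc, ← mul_pow, conj_mul', hw, ofReal_one, one_pow, one_pow, one_mul]
  have hdT : (fun z => ‖z‖ ^ d) =O[cocompact ℂ] T := by
    rw [hT_ext]
    exact norm_pow_isBigO_radialExtend hd (by fun_prop) (fun w hw => mul_ne_zero
      (pow_ne_zero d (ne_zero_of_norm_ne_zero (by simp [hw]))) (hTtilde_ne w hw)) _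
  have hfT' : f ~[cocompact ℂ] T := hfT.trans_isBigO hdT
  exact hasDegree_of_isEquivalent_radialExtend hf hg hfg hd hTtilde_ne (hT_ext ▸ hfT')
    ((hgd.trans hdT).trans hfT'.isBigO_symm) hR hRfg

end Degree

section EvalZZbar

theorem contDiff_evalZZbar (p : MvPolynomial (Fin 2) ℂ) {n : WithTop ℕ∞} :
    ContDiff ℝ n (evalZZbar p) := by
  unfold evalZZbar
  induction p using MvPolynomial.induction_on with
  | C a => simpa only [MvPolynomial.eval_C] using contDiff_const
  | add p q hp hq => simpa only [map_add] using hp.add hq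
  | mul_X p i hp =>
    have hX : ContDiff ℝ n fun z : ℂ => (![z, (starRingEnd ℂ) z] : Fin 2 → ℂ) i := by
      fin_cases i
      exacts [contDiff_id, conjCLE.contDiff]
    simpa only [map_mul, MvPolynomial.eval_X] using hp.mul hX

theorem eval_smul_of_isHomogeneous {ι K : Type*} [CommSemiring K] {p : MvPolynomial ι K} {d : ℕ}
    (hp : p.IsHomogeneous d) (r : K) (x : ι → K) :
    MvPolynomial.eval (r • x) p = r ^ d * MvPolynomial.eval x p := by
  simp only [MvPolynomial.eval_eq, Finset.mul_sum]
  refine Finset.sum_congr rfl fun m hm => ?_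
  rw [hp.degree_eq_sum_deg_support hm]
  simp only [Pi.smul_apply, smul_eq_mul, mul_pow, Finset.prod_mul_distrib,
    Finset.prod_pow_eq_pow_sum, mul_left_comm]

theorem evalZZbar_smul {p : MvPolynomial (Fin 2) ℂ} {d : ℕ} (hp : p.IsHomogeneous d) (r : ℝ)
    (z : ℂ) : evalZZbar p (r • z) = r ^ d • evalZZbar p z := by
  have hvec : ![r • z, (starRingEnd ℂ) (r • z)] = (r : ℂ) • ![z, (starRingEnd ℂ) z] := by simp
  rw [evalZZbar, hvec, eval_smul_of_isHomogeneous hp, evalZZbar, real_smul, ofReal_pow]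

theorem evalZZbar_isBigO_norm_pow {p : MvPolynomial (Fin 2) ℂ} {d : ℕ} (hp : p.IsHomogeneous d)
    (l : Filter ℂ) : evalZZbar p =O[l] fun z => ‖z‖ ^ d := by
  rw [← radialExtend_eq_self (evalZZbar_smul hp)]
  exact radialExtend_isBigO_norm_pow (contDiff_evalZZbar p (n := 0)).continuous d l

theorem norm_pow_isLittleO_norm_pow {k d : ℕ} (hkd : k < d) :
    (fun z : ℂ => ‖z‖ ^ k) =o[cocompact ℂ] fun z => ‖z‖ ^ d := by
  rw [← Metric.cobounded_eq_cocompact]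
  simpa only [norm_pow] using (isLittleO_pow_pow_cobounded_of_lt (R := ℂ) hkd).norm_norm

theorem evalZZbar_sub_homogeneousComponent_isLittleO (p : MvPolynomial (Fin 2) ℂ) :
    (evalZZbar p - evalZZbar (MvPolynomial.homogeneousComponent p.totalDegree p))
      =o[cocompact ℂ] fun z => ‖z‖ ^ p.totalDegree := by
  have hsum : evalZZbar p = ∑ k ∈ Finset.range (p.totalDegree + 1),
      evalZZbar (MvPolynomial.homogeneousComponent k p) := by
    ext z
    simp only [Finset.sum_apply, evalZZbar, ← map_sum, MvPolynomial.sum_homogeneousComponent]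
  rw [hsum, Finset.sum_range_succ, add_sub_cancel_right]
  exact .sum fun k hk => (evalZZbar_isBigO_norm_pow
    (MvPolynomial.homogeneousComponent_isHomogeneous k p) _).trans_isLittleO
      (norm_pow_isLittleO_norm_pow (Finset.mem_range.1 hk))

theorem evalZZbar_isBigO_of_totalDegree_le {p : MvPolynomial (Fin 2) ℂ} {d : ℕ}
    (hp : p.totalDegree ≤ d) : evalZZbar p =O[cocompact ℂ] fun z => ‖z‖ ^ d := by
  have htop : evalZZbar p =O[cocompact ℂ] fun z => ‖z‖ ^ p.totalDegree := by
    rw [← sub_add_cancel (evalZZbar p) (evalZZbar (MvPolynomial.homogeneousComponent _ p))]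
    exact (evalZZbar_sub_homogeneousComponent_isLittleO p).isBigO.add (evalZZbar_isBigO_norm_pow
      (MvPolynomial.homogeneousComponent_isHomogeneous _ p) _)
  rcases hp.eq_or_lt with rfl | hlt
  · exact htop
  · exact htop.trans (norm_pow_isLittleO_norm_pow hlt).isBigO

theorem evalZZbar_eq_eval_inv (p : MvPolynomial (Fin 2) ℂ) {z : ℂ} (hz : ‖z‖ = 1) :
    evalZZbar p z = MvPolynomial.eval ![z, z⁻¹] p := by
  rw [evalZZbar, inv_eq_conj hz]

end EvalZZbar

/-- **Theorem 2 (root-counting form).**  Let `R = f(z,z̄)/g(z,z̄)` with `f, g`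
polynomials in `z` and `z̄` without common zeros, `deg f ≥ deg g`, `d = deg f`, and
let `T` be the top homogeneous component of `f` (of degree `d`); assume
`|T(z,z̄)| → ∞` as `|z| → ∞`.  Let `R : ℂ̄ → ℂ̄` be the continuous map equal to `f/g`
where `g ≠ 0`, to `∞` where `g = 0`, and to `lim_{|z|→∞} f/g` at `∞` (this limit is
the value forced by continuity).  Then the degree of the map `R` equals the number of
roots of `T̃(z) = z^d · T(z, z⁻¹)` in the open unit disk, counted with multiplicity,
minus `d`. -/
theorem degree_eq_roots_in_disk_sub_d
    (f g : MvPolynomial (Fin 2) ℂ)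
    (hfg : ∀ z : ℂ, ¬(evalZZbar f z = 0 ∧ evalZZbar g z = 0))
    (hdeg : g.totalDegree ≤ f.totalDegree)
    (d : ℕ) (hd : d = f.totalDegree)
    (T : MvPolynomial (Fin 2) ℂ) (hT : T = MvPolynomial.homogeneousComponent d f)
    (hTinf : Tendsto (fun z : ℂ => ‖evalZZbar T z‖) (cocompact ℂ) atTop)
    (R : OnePoint ℂ → OnePoint ℂ) (hRcont : Continuous R)
    (hR₁ : ∀ z : ℂ, evalZZbar g z ≠ 0 →
      R z = ((evalZZbar f z / evalZZbar g z : ℂ) : OnePoint ℂ))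
    (hR₂ : ∀ z : ℂ, evalZZbar g z = 0 → R z = ∞)
    (Ttilde : Polynomial ℂ)
    (hTtilde : ∀ z : ℂ, z ≠ 0 →
      Ttilde.eval z = z ^ d * MvPolynomial.eval ![z, z⁻¹] T) :
    HasDegree R (((Ttilde.roots.filter fun z => ‖z‖ < 1).card : ℤ) - (d : ℤ)) := by
  subst hd hT
  exact degree_eq_roots_in_disk_sub_d_general (contDiff_evalZZbar f) (contDiff_evalZZbar g)
    (fun z h => hfg z (Prod.mk.inj h))
    (evalZZbar_smul (MvPolynomial.homogeneousComponent_isHomogeneous _ f)) hTinf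
    (evalZZbar_sub_homogeneousComponent_isLittleO f) (evalZZbar_isBigO_of_totalDegree_le hdeg)
    hRcont (fun z => eq_homogPoint (hR₁ z) (hR₂ z)) fun w hw =>
      evalZZbar_eq_eval_inv _ hw ▸ hTtilde w (ne_zero_of_norm_ne_zero (by simp [hw]))
end
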